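/- arXiv:math/0212267 — 5 statements merged into one kernel-verified Lean document; each statement's English description precedes it below -/
import Mathlib

section
/- For all integers n and k with n ≥ 4, 0 ≤ k ≤ n, n + k even, and n - k ≥ 6, the number of involutions of {1,2,…,n} with exactly k fixed points that contain the pattern 231 exactly once equals (k-1)·2^{(n-k-6)/2}·( C((n+k)/2 - 2, (n-k)/2 - 1) + 2·C((n+k)/2 - 3, (n-k)/2 - 1) + C((n+k)/2 - 4, (n-k)/2 - 1) ); when n + k is odd this number is 0. -/
/-- The number of fixed points of a permutation of `Fin n`. -/
def fixedPts {n : ℕ} (π : Equiv.Perm (Fin n)) : ℕ :=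
  (Finset.univ.filter fun i => π i = i).card

/-- A permutation is an involution if it is its own inverse. -/
def IsInvolution {n : ℕ} (π : Equiv.Perm (Fin n)) : Prop :=
  ∀ i, π (π i) = i

/-- The number of occurrences of the pattern 231 in a permutation of `Fin n`. -/
noncomputable def occ231 {n : ℕ} (π : Equiv.Perm (Fin n)) : ℕ :=
  Nat.card {t : Fin n × Fin n × Fin n //
    t.1 < t.2.1 ∧ t.2.1 < t.2.2 ∧ (π t.2.2 < π t.1 ∧ π t.1 < π t.2.1)}

/-- `i_n^k(∅;231)`: the number of involutions of `{1, …, n}` with exactly `k` fixed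
points containing the pattern 231 exactly once. -/
noncomputable def iCountOnce231 (n k : ℕ) : ℕ :=
  Nat.card {π : Equiv.Perm (Fin n) // IsInvolution π ∧ occ231 π = 1 ∧ fixedPts π = k}

/-!
Let `f` be an involution of `{0, …, n - 1}` with at most one occurrence of 231. If `0 < i < f 0`,
then `f i < f 0`, since otherwise both `(0, i, f 0)` and `(0, i, f i)` are occurrences. Hence `f`
maps the initial segment `{0, …, f 0}` to itself, and since `f (f 0) = 0`, every ascent strictly
inside the segment is completed by `f 0` to an occurrence. So the segment is either decreasing or
the block 4231. Consequently the involutions avoiding 231 are the direct sums of decreasing blocks,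
and those containing it once are the direct sums of decreasing blocks and exactly one block 4231.

With `t` marking the size and `x` the fixed points, the decreasing blocks have the generating
function `(x t + t²) / (1 - t²)`, so the involutions avoiding 231 have
`P = (1 - t²) / (1 - x t - 2 t²)`, and those containing it once have `x² t⁴ P²`. Its coefficient of
`x^(k + 2)` is `(k + 1) t^(k + 4) (1 - t²)² / (1 - 2 t²)^(k + 2)`, and
`4 (1 - t²)² = (1 + (1 - 2 t²))²` splits it into the three binomial coefficients.
-/

namespace Pattern231

/-- The occurrences of the pattern 231 in `f`, as triples of positions. -/
def occurrences (f : ℕ → ℕ) : Set (ℕ × ℕ × ℕ) :=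
  {t | t.1 < t.2.1 ∧ t.2.1 < t.2.2 ∧ f t.2.2 < f t.1 ∧ f t.1 < f t.2.1}

/-- `f` restricts to an involution of `{0, …, n - 1}` and is the identity elsewhere. Involutions of
all sizes thus live in the single type `ℕ → ℕ`, where direct sums and initial blocks need no
casts. -/
structure IsInvolutionOn (n : ℕ) (f : ℕ → ℕ) : Prop where
  involutive : Function.Involutive f
  eq_self_of_le : ∀ i, n ≤ i → f i = i

/-- The number of fixed points of `f` below `n`. -/
def numFixed (n : ℕ) (f : ℕ → ℕ) : ℕ :=
  Nat.count (fun i => f i = i) n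

theorem mk_mem_occurrences {f : ℕ → ℕ} {i j k : ℕ} :
    (i, j, k) ∈ occurrences f ↔ i < j ∧ j < k ∧ f k < f i ∧ f i < f j :=
  Iff.rfl

namespace IsInvolutionOn

variable {n : ℕ} {f : ℕ → ℕ}

theorem apply_lt (hf : IsInvolutionOn n f) {i : ℕ} (hi : i < n) : f i < n := by
  by_contra! h
  have := hf.eq_self_of_le (f i) h
  rw [hf.involutive i] at this
  omega

theorem lt_of_mem_occurrences (hf : IsInvolutionOn n f) {t : ℕ × ℕ × ℕ}
    (ht : t ∈ occurrences f) : t.2.2 < n := by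
  obtain ⟨hij, hjk, hki, -⟩ := ht
  by_contra! hk
  rw [hf.eq_self_of_le _ hk] at hki
  rcases lt_or_ge t.1 n with hi | hi
  · have := hf.apply_lt hi
    omega
  · rw [hf.eq_self_of_le _ hi] at hki
    omega

theorem finite_occurrences (hf : IsInvolutionOn n f) : (occurrences f).Finite := by
  refine ((Set.finite_Iio n).prod ((Set.finite_Iio n).prod (Set.finite_Iio n))).subset ?_
  intro t ht
  have hk := hf.lt_of_mem_occurrences ht
  obtain ⟨hij, hjk, -⟩ := ht
  exact ⟨(hij.trans hjk).trans hk, hjk.trans hk, hk⟩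

end IsInvolutionOn

section DirectSum

/-- The direct sum `h ⊕ g`, where `h` is regarded as a function on `{0, …, s - 1}`. -/
def directSum (s : ℕ) (h g : ℕ → ℕ) (i : ℕ) : ℕ :=
  if i < s then h i else s + g (i - s)

variable {s n : ℕ} {h g : ℕ → ℕ}

theorem directSum_of_lt {i : ℕ} (hi : i < s) : directSum s h g i = h i :=
  if_pos hi

theorem directSum_add (i : ℕ) : directSum s h g (s + i) = s + g i := by
  simp [directSum]

theorem directSum_injective (s : ℕ) (h : ℕ → ℕ) : Function.Injective (directSum s h) := by
  intro g g' e
  funext i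
  simpa only [directSum_add, Nat.add_left_cancel_iff] using congrFun e (s + i)

theorem numFixed_directSum :
    numFixed (s + n) (directSum s h g) = numFixed s h + numFixed n g := by
  unfold numFixed
  rw [Nat.count_add]
  congr 1
  · simp only [Nat.count_eq_card_filter_range]
    congr 1
    refine Finset.filter_congr fun i hi => ?_
    rw [directSum_of_lt (Finset.mem_range.mp hi)]
  · simp only [directSum_add, Nat.add_left_cancel_iff]

theorem IsInvolutionOn.directSum (hh : IsInvolutionOn s h) (hg : IsInvolutionOn n g) :
    IsInvolutionOn (s + n) (directSum s h g) where
  involutive i := by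
    rcases lt_or_ge i s with hi | hi
    · rw [directSum_of_lt hi, directSum_of_lt (hh.apply_lt hi), hh.involutive]
    · obtain ⟨i, rfl⟩ := Nat.exists_eq_add_of_le hi
      rw [directSum_add, directSum_add, hg.involutive]
  eq_self_of_le i hi := by
    obtain ⟨i, rfl⟩ := Nat.exists_eq_add_of_le (le_of_add_le_left hi)
    rw [directSum_add, hg.eq_self_of_le i (by omega)]

theorem IsInvolutionOn.exists_directSum_eq {f : ℕ → ℕ} (hf : IsInvolutionOn (s + n) f)
    (hh : IsInvolutionOn s h) (hfh : Set.EqOn f h (Set.Iio s)) :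
    ∃ g, IsInvolutionOn n g ∧ Pattern231.directSum s h g = f := by
  have le_apply_add (i : ℕ) : s ≤ f (s + i) := by
    by_contra! hlt
    have hfi : s + i = h (f (s + i)) := by rw [← hfh hlt, hf.involutive]
    have := hh.apply_lt hlt
    omega
  have add_sub_apply (i : ℕ) : s + (f (s + i) - s) = f (s + i) :=
    Nat.add_sub_of_le (le_apply_add i)
  refine ⟨fun i => f (s + i) - s, ⟨fun i => ?_, fun i hi => ?_⟩, ?_⟩
  · simp only [add_sub_apply, hf.involutive _, Nat.add_sub_cancel_left]
  · simp only [hf.eq_self_of_le (s + i) (by omega), Nat.add_sub_cancel_left]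
  · funext i
    rcases lt_or_ge i s with hi | hi
    · rw [directSum_of_lt hi, hfh hi]
    · obtain ⟨i, rfl⟩ := Nat.exists_eq_add_of_le hi
      rw [directSum_add, add_sub_apply]

theorem occurrences_directSum (hh : IsInvolutionOn s h) :
    occurrences (directSum s h g) =
      occurrences h ∪ (fun t => (s + t.1, s + t.2.1, s + t.2.2)) '' occurrences g := by
  ext ⟨i, j, k⟩
  simp only [Set.mem_union, Set.mem_image, Prod.exists, Prod.mk.injEq, mk_mem_occurrences]
  constructor
  · rintro ⟨hij, hjk, hki, hij'⟩
    rcases lt_or_ge i s with hi | hi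
    · have hk : k < s := by
        by_contra! hk
        obtain ⟨k, rfl⟩ := Nat.exists_eq_add_of_le hk
        rw [directSum_of_lt hi, directSum_add] at hki
        have := hh.apply_lt hi
        omega
      rw [directSum_of_lt hi, directSum_of_lt hk] at hki
      rw [directSum_of_lt hi, directSum_of_lt (hjk.trans hk)] at hij'
      exact Or.inl ⟨hij, hjk, hki, hij'⟩
    · obtain ⟨i, rfl⟩ := Nat.exists_eq_add_of_le hi
      obtain ⟨j, rfl⟩ := Nat.exists_eq_add_of_le (hi.trans hij.le)
      obtain ⟨k, rfl⟩ := Nat.exists_eq_add_of_le (hi.trans (hij.trans hjk).le)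
      simp only [directSum_add] at hki hij'
      exact Or.inr ⟨i, j, k, by omega, rfl, rfl, rfl⟩
  · rintro (hocc | ⟨i, j, k, hocc, rfl, rfl, rfl⟩)
    · have hk : k < s := hh.lt_of_mem_occurrences (t := (i, j, k)) hocc
      rwa [directSum_of_lt hk, directSum_of_lt (hocc.2.1.trans hk),
        directSum_of_lt ((hocc.1.trans hocc.2.1).trans hk)]
    · simpa only [directSum_add, Nat.add_lt_add_iff_left] using hocc

theorem encard_occurrences_directSum (hh : IsInvolutionOn s h) :
    (occurrences (directSum s h g)).encard =
      (occurrences h).encard + (occurrences g).encard := by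
  have shift_injective :
      Function.Injective fun t : ℕ × ℕ × ℕ => (s + t.1, s + t.2.1, s + t.2.2) := by
    rintro ⟨i, j, k⟩ ⟨i', j', k'⟩
    simp
  rw [occurrences_directSum hh, Set.encard_union_eq, shift_injective.encard_image]
  refine Set.disjoint_left.mpr ?_
  rintro _ ht ⟨t, -, rfl⟩
  have := hh.lt_of_mem_occurrences ht
  simp at this

end DirectSum

section Blocks

/-- The decreasing permutation of `{0, …, s - 1}`. -/
def reversal (s i : ℕ) : ℕ :=
  if i < s then s - 1 - i else i

theorem isInvolutionOn_reversal (s : ℕ) : IsInvolutionOn s (reversal s) where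
  involutive i := by
    unfold reversal
    split_ifs <;> omega
  eq_self_of_le i hi := if_neg hi.not_gt

theorem occurrences_reversal (s : ℕ) : occurrences (reversal s) = ∅ := by
  refine Set.eq_empty_iff_forall_notMem.mpr ?_
  rintro ⟨i, j, k⟩ ⟨hij, hjk, hki, hij'⟩
  simp only [reversal] at hki hij'
  grind

theorem numFixed_reversal (s : ℕ) : numFixed s (reversal s) = s % 2 := by
  have fixed_iff (i : ℕ) (hi : i < s) : reversal s i = i ↔ s = 2 * i + 1 := by
    rw [reversal, if_pos hi]
    omega
  rw [numFixed, Nat.count_eq_card_filter_range,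
    Finset.filter_congr fun i hi => fixed_iff i (Finset.mem_range.mp hi)]
  rcases Nat.even_or_odd' s with ⟨c, rfl | rfl⟩
  · rw [Finset.filter_false_of_mem fun i _ => by omega]
    simp
  · rw [Finset.filter_congr fun i _ => show 2 * c + 1 = 2 * i + 1 ↔ c = i by omega,
      Finset.filter_eq, if_pos (Finset.mem_range.mpr (by omega)), Finset.card_singleton]
    omega

theorem isInvolutionOn_swap {i j n : ℕ} (hi : i < n) (hj : j < n) :
    IsInvolutionOn n (Equiv.swap i j) where
  involutive := Equiv.swap_apply_self i j
  eq_self_of_le _ hk := Equiv.swap_apply_of_ne_of_ne (hi.trans_le hk).ne' (hj.trans_le hk).ne'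

theorem occurrences_swap_zero_three : occurrences (Equiv.swap 0 3) = {(1, 2, 3)} := by
  ext ⟨i, j, k⟩
  simp only [mk_mem_occurrences, Equiv.swap_apply_def, Set.mem_singleton_iff, Prod.mk.injEq]
  grind

theorem numFixed_swap_zero_three : numFixed 4 (Equiv.swap 0 3) = 2 := by
  decide

end Blocks

section FirstBlock

variable {f : ℕ → ℕ}

theorem eqOn_reversal_of_strictAntiOn {m : ℕ} (hle : ∀ i ≤ m, f i ≤ m)
    (hanti : StrictAntiOn f (Set.Iic m)) :
    Set.EqOn f (reversal (m + 1)) (Set.Iio (m + 1)) := by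
  have le_sub_apply : ∀ i ≤ m, i ≤ m - f i := by
    refine StrictMonoOn.Iic_id_le fun i hi j hj hij => ?_
    have := hle i hi
    have := hanti hi hj hij
    omega
  have le_apply_sub : ∀ i ≤ m, i ≤ f (m - i) := by
    refine StrictMonoOn.Iic_id_le fun i hi j hj hij => ?_
    simp only [Set.mem_Iic] at hi hj
    exact hanti (Nat.sub_le m j) (Nat.sub_le m i) (by omega)
  intro i (hi : i < m + 1)
  have h₁ := hle i (by omega)
  have h₂ := le_sub_apply i (by omega)
  have h₃ := le_apply_sub (m - i) (Nat.sub_le m i)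
  rw [Nat.sub_sub_self (by omega)] at h₃
  rw [reversal, if_pos hi]
  omega

theorem apply_le_apply_zero (hf : Function.Involutive f) (hsub : (occurrences f).Subsingleton)
    {i : ℕ} (hi : i ≤ f 0) : f i ≤ f 0 := by
  by_contra! hlt
  have hf0 := hf 0
  have hfi := hf i
  have hi0 : 0 < i := Nat.pos_of_ne_zero (by rintro rfl; omega)
  have hif : i < f 0 := hi.lt_of_ne (by rintro rfl; omega)
  have h₁ : (0, i, f 0) ∈ occurrences f := mk_mem_occurrences.mpr (by omega)
  have h₂ : (0, i, f i) ∈ occurrences f := mk_mem_occurrences.mpr (by omega)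
  have := hsub h₁ h₂
  simp only [Prod.mk.injEq] at this
  omega

theorem mem_occurrences_of_ascent (hf : Function.Involutive f) {i j : ℕ} (hij : i < j)
    (hj : j < f 0) (hlt : f i < f j) : (i, j, f 0) ∈ occurrences f := by
  have hne : f i ≠ 0 := fun h => by
    have := hf i
    rw [h] at this
    omega
  refine mk_mem_occurrences.mpr ⟨hij, hj, ?_, hlt⟩
  rw [hf 0]
  exact Nat.pos_of_ne_zero hne

theorem apply_mem_Ioo (hf : Function.Involutive f) (hsub : (occurrences f).Subsingleton)
    {i : ℕ} (hi : i ∈ Set.Ioo 0 (f 0)) : f i ∈ Set.Ioo 0 (f 0) := by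
  obtain ⟨hi0, hif⟩ := hi
  have hfi := hf i
  have hle := apply_le_apply_zero hf hsub hif.le
  have h₁ : f i ≠ 0 := fun h => by rw [h] at hfi; omega
  have h₂ : f i ≠ f 0 := hf.injective.ne hi0.ne'
  exact ⟨by omega, by omega⟩

theorem strictAntiOn_Iic_apply_zero (hf : Function.Involutive f)
    (hsub : (occurrences f).Subsingleton) (hanti : StrictAntiOn f (Set.Ioo 0 (f 0))) :
    StrictAntiOn f (Set.Iic (f 0)) := by
  intro i _ j (hj : j ≤ f 0) hij
  rcases Nat.eq_zero_or_pos i with rfl | hi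
  · exact (apply_le_apply_zero hf hsub hj).lt_of_ne (hf.injective.ne hij.ne')
  rcases hj.lt_or_eq with hj | rfl
  · exact hanti ⟨hi, hij.trans hj⟩ ⟨hi.trans hij, hj⟩ hij
  · rw [hf 0]
    exact (apply_mem_Ioo hf hsub ⟨hi, hij⟩).1

section Ascent

variable {i j : ℕ}

/-- Since `f` is an involution, `(f i, f j)` is an ascent too, so it gives the same occurrence. -/
theorem apply_eq_self_of_ascent (hf : Function.Involutive f)
    (hsub : (occurrences f).Subsingleton) (hi : 0 < i) (hij : i < j) (hj : j < f 0)
    (hlt : f i < f j) : f i = i ∧ f j = j := by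
  have hfj := apply_mem_Ioo hf hsub ⟨hi.trans hij, hj⟩
  have hmem : (f i, f j, f 0) ∈ occurrences f :=
    mem_occurrences_of_ascent hf hlt hfj.2 (by rwa [hf i, hf j])
  have := hsub hmem (mem_occurrences_of_ascent hf hij hj hlt)
  simp only [Prod.mk.injEq] at this
  exact ⟨this.1, this.2.1⟩

theorem Ioo_subset_pair_of_ascent (hf : Function.Involutive f)
    (hsub : (occurrences f).Subsingleton) (hi : 0 < i) (hij : i < j) (hj : j < f 0)
    (hlt : f i < f j) : Set.Ioo 0 (f 0) ⊆ {i, j} := by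
  obtain ⟨hfi, hfj⟩ := apply_eq_self_of_ascent hf hsub hi hij hj hlt
  have hmem := mem_occurrences_of_ascent hf hij hj hlt
  have eq_of_mem {x y z : ℕ} (h : (x, y, z) ∈ occurrences f) : x = i ∧ y = j ∧ z = f 0 := by
    simpa only [Prod.mk.injEq] using hsub h hmem
  have descent {x y : ℕ} (hxy : x < y) (hy : y < f 0) (hne : x ≠ i ∨ y ≠ j) : f y < f x := by
    by_contra! hle
    have hlt := hle.lt_of_ne (hf.injective.ne hxy.ne)
    have := eq_of_mem (mem_occurrences_of_ascent hf hxy hy hlt)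
    omega
  have not_mem {z : ℕ} (hjz : j < z) (hz : z ≠ f 0) (hzi : f z < i) : False :=
    hz (eq_of_mem (mk_mem_occurrences.mpr ⟨hij, hjz, by omega, by omega⟩)).2.2
  intro x hx
  have hfx := apply_mem_Ioo hf hsub hx
  have hxf := hx.2
  by_contra! hne
  obtain ⟨hne_i, hne_j⟩ : x ≠ i ∧ x ≠ j := not_or.mp hne
  rcases hne_i.lt_or_gt with hxi | hix
  · have hjx : f j < f x := descent (hxi.trans hij) hj (Or.inl hne_i)
    exact not_mem (z := f x) (by omega) hfx.2.ne (by rwa [hf x])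
  · have hxi : f x < f i := descent hix hxf (Or.inr hne_j)
    rcases hne_j.lt_or_gt with hxj | hjx
    · have : f j < f x := descent hxj hj (Or.inl hne_i)
      omega
    · exact not_mem hjx hxf.ne (by omega)

theorem eqOn_swap_of_ascent (hf : Function.Involutive f)
    (hsub : (occurrences f).Subsingleton) (hi : 0 < i) (hij : i < j) (hj : j < f 0)
    (hlt : f i < f j) : Set.EqOn f (Equiv.swap 0 3) (Set.Iio 4) := by
  obtain ⟨hfi, hfj⟩ := apply_eq_self_of_ascent hf hsub hi hij hj hlt
  have eq_or_eq (x : ℕ) (h0 : 0 < x) (hx : x < f 0) : x = i ∨ x = j :=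
    Ioo_subset_pair_of_ascent hf hsub hi hij hj hlt ⟨h0, hx⟩
  have h₁ := eq_or_eq 1 one_pos (by omega)
  have h₂ := eq_or_eq 2 two_pos (by omega)
  have h₃ := eq_or_eq 3 three_pos
  obtain ⟨rfl, rfl, hf0⟩ : i = 1 ∧ j = 2 ∧ f 0 = 3 := by omega
  have hf3 : f 3 = 0 := hf0 ▸ hf 0
  intro x (hx : x < 4)
  interval_cases x
  exacts [hf0, hfi, hfj, hf3]

end Ascent

theorem eqOn_reversal_or_eqOn_swap (hf : Function.Involutive f)
    (hsub : (occurrences f).Subsingleton) :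
    Set.EqOn f (reversal (f 0 + 1)) (Set.Iio (f 0 + 1)) ∨
      Set.EqOn f (Equiv.swap 0 3) (Set.Iio 4) := by
  by_cases hanti : StrictAntiOn f (Set.Ioo 0 (f 0))
  · exact Or.inl <| eqOn_reversal_of_strictAntiOn (fun _ => apply_le_apply_zero hf hsub)
      (strictAntiOn_Iic_apply_zero hf hsub hanti)
  · simp only [StrictAntiOn] at hanti
    push Not at hanti
    obtain ⟨i, hi, j, hj, hij, hle⟩ := hanti
    exact Or.inr <| eqOn_swap_of_ascent hf hsub hi.1 hij hj.2
      (hle.lt_of_ne (hf.injective.ne hij.ne))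

end FirstBlock

section FinPerm

variable {n : ℕ}

/-- A permutation of `Fin n`, extended by the identity to `ℕ`. -/
def toNatFun (π : Equiv.Perm (Fin n)) : ℕ → ℕ :=
  π.extendDomain Fin.equivSubtype

theorem toNatFun_val (π : Equiv.Perm (Fin n)) (i : Fin n) : toNatFun π i = π i :=
  π.extendDomain_apply_image Fin.equivSubtype i

theorem toNatFun_of_le (π : Equiv.Perm (Fin n)) {i : ℕ} (hi : n ≤ i) : toNatFun π i = i :=
  π.extendDomain_apply_not_subtype Fin.equivSubtype hi.not_gt

theorem toNatFun_injective : Function.Injective (toNatFun (n := n)) := by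
  intro π σ h
  ext i
  rw [← toNatFun_val, ← toNatFun_val, h]

theorem isInvolutionOn_toNatFun {π : Equiv.Perm (Fin n)} :
    IsInvolutionOn n (toNatFun π) ↔ IsInvolution π := by
  constructor
  · intro h i
    ext
    rw [← toNatFun_val, ← toNatFun_val, h.involutive]
  · refine fun h => ⟨fun i => ?_, fun i => toNatFun_of_le π⟩
    rcases lt_or_ge i n with hi | hi
    · lift i to Fin n using hi
      rw [toNatFun_val, toNatFun_val, h]
    · rw [toNatFun_of_le π hi, toNatFun_of_le π hi]

theorem IsInvolutionOn.exists_toNatFun_eq {f : ℕ → ℕ} (hf : IsInvolutionOn n f) :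
    ∃ π : Equiv.Perm (Fin n), toNatFun π = f := by
  let g : Fin n → Fin n := fun i => ⟨f i, hf.apply_lt i.isLt⟩
  have hg : Function.Involutive g := fun i => Fin.ext (hf.involutive i)
  refine ⟨hg.toPerm, funext fun i => ?_⟩
  rcases lt_or_ge i n with hi | hi
  · exact toNatFun_val hg.toPerm ⟨i, hi⟩
  · rw [toNatFun_of_le _ hi, hf.eq_self_of_le i hi]

theorem numFixed_toNatFun (π : Equiv.Perm (Fin n)) : numFixed n (toNatFun π) = fixedPts π := by
  rw [numFixed, Nat.count_eq_card_filter_range, Finset.card_filter, Finset.sum_range, fixedPts,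
    Finset.card_filter]
  simp only [toNatFun_val, Fin.ext_iff]

theorem encard_occurrences_toNatFun {π : Equiv.Perm (Fin n)} (hπ : IsInvolution π) :
    (occurrences (toNatFun π)).encard = occ231 π := by
  let toNatTriple : Fin n × Fin n × Fin n → ℕ × ℕ × ℕ := fun t => (t.1, t.2.1, t.2.2)
  have toNatTriple_injective : Function.Injective toNatTriple := by
    rintro ⟨i, j, k⟩ ⟨i', j', k'⟩
    simp [toNatTriple, Fin.ext_iff]
  have image_eq : occurrences (toNatFun π) = toNatTriple ''
      {t | t.1 < t.2.1 ∧ t.2.1 < t.2.2 ∧ (π t.2.2 < π t.1 ∧ π t.1 < π t.2.1)} := by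
    ext ⟨i, j, k⟩
    constructor
    · intro hocc
      have hk : k < n := (isInvolutionOn_toNatFun.mpr hπ).lt_of_mem_occurrences hocc
      obtain ⟨hij, hjk, hval⟩ := hocc
      lift k to Fin n using hk
      lift j to Fin n using hjk.trans k.isLt
      lift i to Fin n using hij.trans j.isLt
      simp only [toNatFun_val] at hval
      exact ⟨(i, j, k), ⟨hij, hjk, hval⟩, rfl⟩
    · rintro ⟨⟨i, j, k⟩, hocc, ⟨⟩⟩
      simp only [mk_mem_occurrences, toNatFun_val]
      exact hocc
  rw [image_eq, toNatTriple_injective.encard_image, occ231]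
  exact ENat.card_eq_coe_natCard _

end FinPerm

section Enumerator

theorem finite_setOf_isInvolutionOn (n : ℕ) (p : ℕ∞) :
    {f | IsInvolutionOn n f ∧ (occurrences f).encard = p}.Finite :=
  (Set.finite_range (toNatFun (n := n))).subset fun _ hf => hf.1.exists_toNatFun_eq

/-- The involutions of `{0, …, n - 1}` with exactly `p` occurrences of 231. -/
noncomputable def involutions (n : ℕ) (p : ℕ∞) : Finset (ℕ → ℕ) :=
  (finite_setOf_isInvolutionOn n p).toFinset

theorem mem_involutions {n : ℕ} {p : ℕ∞} {f : ℕ → ℕ} :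
    f ∈ involutions n p ↔ IsInvolutionOn n f ∧ (occurrences f).encard = p :=
  Set.Finite.mem_toFinset _

open Polynomial

/-- The fixed-point enumerator of `involutions n p`. -/
noncomputable def enumerator (p : ℕ∞) (n : ℕ) : ℤ[X] :=
  ∑ f ∈ involutions n p, X ^ numFixed n f

theorem coeff_enumerator_one (n k : ℕ) : (enumerator 1 n).coeff k = iCountOnce231 n k := by
  simp only [enumerator, finsetSum_coeff, coeff_X_pow, Finset.sum_boole, iCountOnce231]
  rw [← Nat.card_eq_finsetCard, Nat.cast_inj]
  have mem_iff (π : Equiv.Perm (Fin n)) : (IsInvolution π ∧ occ231 π = 1 ∧ fixedPts π = k) ↔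
      toNatFun π ∈ {f ∈ involutions n 1 | k = numFixed n f} := by
    rw [Finset.mem_filter, mem_involutions, isInvolutionOn_toNatFun, numFixed_toNatFun, and_assoc]
    refine and_congr_right fun hπ => ?_
    rw [encard_occurrences_toNatFun hπ, Nat.cast_eq_one, eq_comm (a := k)]
  symm
  refine Nat.card_congr (Equiv.ofBijective
    (fun π => ⟨toNatFun π.1, (mem_iff π.1).mp π.2⟩) ⟨fun π σ h => ?_, ?_⟩)
  · exact Subtype.ext (toNatFun_injective (Subtype.ext_iff.mp h))
  · rintro ⟨f, hf⟩
    obtain ⟨π, rfl⟩ :=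
      (mem_involutions.mp (Finset.mem_filter.mp hf).1).1.exists_toNatFun_eq
    exact ⟨⟨π, (mem_iff π).mpr hf⟩, rfl⟩

open Classical in
theorem sum_filter_eqOn_initial_block {s r : ℕ} {h : ℕ → ℕ} (hh : IsInvolutionOn s h) (p : ℕ∞) :
    ∑ f ∈ involutions (s + r) ((occurrences h).encard + p) with Set.EqOn f h (Set.Iio s),
      (X : ℤ[X]) ^ numFixed (s + r) f = X ^ numFixed s h * enumerator p r := by
  have hfin : (occurrences h).encard ≠ ⊤ := Set.encard_ne_top_iff.mpr hh.finite_occurrences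
  rw [enumerator, Finset.mul_sum]
  symm
  refine Finset.sum_bij (fun g _ => directSum s h g) (fun g hg => ?_)
    (fun g _ g' _ e => directSum_injective s h e) (fun f hf => ?_) (fun g _ => ?_)
  · rw [mem_involutions] at hg
    rw [Finset.mem_filter, mem_involutions, encard_occurrences_directSum hh, hg.2]
    exact ⟨⟨hh.directSum hg.1, rfl⟩, fun i => directSum_of_lt⟩
  · rw [Finset.mem_filter, mem_involutions] at hf
    obtain ⟨⟨hf, hocc⟩, hfh⟩ := hf
    obtain ⟨g, hg, rfl⟩ := hf.exists_directSum_eq hh hfh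
    rw [encard_occurrences_directSum hh] at hocc
    exact ⟨g, mem_involutions.mpr ⟨hg, ENat.add_right_injective_of_ne_top hfin hocc⟩, rfl⟩
  · rw [numFixed_directSum, pow_add]

end Enumerator

section Recurrence

open Finset.HasAntidiagonal Polynomial

theorem enumerator_succ (p : ℕ∞) (n : ℕ) :
    enumerator p (n + 1) = ∑ q ∈ antidiagonal n,
      ∑ f ∈ involutions (q.1 + 1 + q.2) p with f 0 = q.1, X ^ numFixed (q.1 + 1 + q.2) f := by
  have apply_zero_mem (f : ℕ → ℕ) (hf : f ∈ involutions (n + 1) p) :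
      f 0 ∈ Finset.range (n + 1) :=
    Finset.mem_range.mpr ((mem_involutions.mp hf).1.apply_lt n.succ_pos)
  have size_eq (q : ℕ × ℕ) (hq : q ∈ antidiagonal n) : q.1 + 1 + q.2 = n + 1 := by
    rw [← mem_antidiagonal.mp hq, add_right_comm]
  rw [enumerator, ← Finset.sum_fiberwise_of_maps_to apply_zero_mem,
    ← Finset.Nat.sum_antidiagonal_eq_sum_range_succ fun m _ =>
      ∑ f ∈ involutions (n + 1) p with f 0 = m, (X : ℤ[X]) ^ numFixed (n + 1) f]
  exact Finset.sum_congr rfl fun q hq => by rw [size_eq q hq]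

theorem apply_zero_eq_iff {f : ℕ → ℕ} {m : ℕ} (hf : Function.Involutive f)
    (hsub : (occurrences f).Subsingleton) :
    f 0 = m ↔ Set.EqOn f (reversal (m + 1)) (Set.Iio (m + 1)) ∨
      m = 3 ∧ Set.EqOn f (Equiv.swap 0 3) (Set.Iio 4) := by
  constructor
  · rintro rfl
    refine (eqOn_reversal_or_eqOn_swap hf hsub).imp_right fun hswap => ⟨?_, hswap⟩
    rw [hswap (Set.mem_Iio.mpr four_pos), Equiv.swap_apply_left]
  · rintro (hrev | ⟨rfl, hswap⟩)
    · rw [hrev (Set.mem_Iio.mpr m.succ_pos)]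
      simp [reversal]
    · rw [hswap (Set.mem_Iio.mpr four_pos), Equiv.swap_apply_left]

theorem not_eqOn_swap_of_occurrences_eq_empty {f : ℕ → ℕ} (hf : occurrences f = ∅) :
    ¬ Set.EqOn f (Equiv.swap 0 3) (Set.Iio 4) := by
  intro hswap
  have hmem : (1, 2, 3) ∈ occurrences f := by
    rw [mk_mem_occurrences, hswap (show 1 < 4 by simp), hswap (show 2 < 4 by simp),
      hswap (show 3 < 4 by simp)]
    decide
  exact Set.notMem_empty _ (hf ▸ hmem)

theorem not_eqOn_swap_of_eqOn_reversal {f : ℕ → ℕ}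
    (hf : Set.EqOn f (reversal 4) (Set.Iio 4)) :
    ¬ Set.EqOn f (Equiv.swap 0 3) (Set.Iio 4) := by
  intro hswap
  have heq : reversal 4 1 = Equiv.swap 0 3 1 :=
    (hf (show 1 < 4 by simp)).symm.trans (hswap (show 1 < 4 by simp))
  revert heq
  decide

theorem sum_involutions_zero_apply_zero_eq (m r : ℕ) :
    ∑ f ∈ involutions (m + 1 + r) 0 with f 0 = m, (X : ℤ[X]) ^ numFixed (m + 1 + r) f =
      X ^ ((m + 1) % 2) * enumerator 0 r := by
  classical
  have sum_reversal := sum_filter_eqOn_initial_block (r := r) (isInvolutionOn_reversal (m + 1)) 0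
  rw [occurrences_reversal, Set.encard_empty, add_zero, numFixed_reversal] at sum_reversal
  rw [← sum_reversal]
  congr 1
  refine Finset.filter_congr fun f hf => ?_
  obtain ⟨hf, hocc⟩ := mem_involutions.mp hf
  rw [Set.encard_eq_zero] at hocc
  rw [apply_zero_eq_iff hf.involutive (hocc ▸ Set.subsingleton_empty), or_iff_left]
  exact fun hswap => not_eqOn_swap_of_occurrences_eq_empty hocc hswap.2

theorem sum_involutions_one_apply_zero_eq (m r : ℕ) :
    ∑ f ∈ involutions (m + 1 + r) 1 with f 0 = m, (X : ℤ[X]) ^ numFixed (m + 1 + r) f =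
      X ^ ((m + 1) % 2) * enumerator 1 r + if m = 3 then X ^ 2 * enumerator 0 r else 0 := by
  classical
  have sum_reversal := sum_filter_eqOn_initial_block (r := r) (isInvolutionOn_reversal (m + 1)) 1
  have sum_swap := sum_filter_eqOn_initial_block (r := r)
    (isInvolutionOn_swap (show 0 < 4 by simp) (show 3 < 4 by simp)) 0
  rw [occurrences_reversal, Set.encard_empty, zero_add, numFixed_reversal] at sum_reversal
  rw [occurrences_swap_zero_three, Set.encard_singleton, add_zero, numFixed_swap_zero_three]
    at sum_swap
  have filter_apply_zero_eq : {f ∈ involutions (m + 1 + r) 1 | f 0 = m} =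
      {f ∈ involutions (m + 1 + r) 1 | Set.EqOn f (reversal (m + 1)) (Set.Iio (m + 1)) ∨
        m = 3 ∧ Set.EqOn f (Equiv.swap 0 3) (Set.Iio 4)} := by
    refine Finset.filter_congr fun f hf => ?_
    obtain ⟨hf, hocc⟩ := mem_involutions.mp hf
    exact apply_zero_eq_iff hf.involutive (Set.encard_le_one_iff_subsingleton.mp hocc.le)
  rw [filter_apply_zero_eq, Finset.filter_or, Finset.sum_union, sum_reversal]
  · split_ifs with hm
    · subst hm
      simp only [true_and]
      rw [← sum_swap]
    · simp [hm]
  · refine Finset.disjoint_filter.mpr ?_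
    rintro f - hrev ⟨rfl, hswap⟩
    exact not_eqOn_swap_of_eqOn_reversal hrev hswap

theorem isInvolutionOn_zero_iff {f : ℕ → ℕ} : IsInvolutionOn 0 f ↔ f = reversal 0 :=
  ⟨fun hf => funext fun i => hf.eq_self_of_le i i.zero_le, fun h => h ▸ isInvolutionOn_reversal 0⟩

theorem enumerator_zero (p : ℕ∞) : enumerator p 0 = if p = 0 then 1 else 0 := by
  have involutions_zero : involutions 0 p = if p = 0 then {reversal 0} else ∅ := by
    ext f
    rw [mem_involutions, isInvolutionOn_zero_iff]
    split_ifs with hp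
    · rw [Finset.mem_singleton, and_iff_left_of_imp]
      rintro rfl
      rw [occurrences_reversal, Set.encard_empty, hp]
    · simp only [Finset.notMem_empty, iff_false, not_and]
      rintro rfl
      rw [occurrences_reversal, Set.encard_empty]
      exact Ne.symm hp
  rw [enumerator, involutions_zero]
  split_ifs
  · rw [Finset.sum_singleton, numFixed_reversal, Nat.zero_mod, pow_zero]
  · exact Finset.sum_empty

end Recurrence

section GeneratingFunction

open PowerSeries
open scoped Polynomial

/-- The generating function of the fixed-point enumerators of involutions with exactly `p`
occurrences of 231. The power series variable `X` marks the size, `Polynomial.X` the fixed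
points. -/
noncomputable def enumeratorSeries (p : ℕ∞) : ℤ[X]⟦X⟧ :=
  mk (enumerator p)

/-- The generating function of the reversals of positive size, divided by `X`. -/
noncomputable def reversalSeries : ℤ[X]⟦X⟧ :=
  mk fun m => Polynomial.X ^ ((m + 1) % 2)

theorem enumeratorSeries_zero_eq :
    enumeratorSeries 0 = 1 + X * (reversalSeries * enumeratorSeries 0) := by
  ext1 n
  cases n with
  | zero => simp [enumeratorSeries, enumerator_zero]
  | succ n =>
    rw [map_add, coeff_succ_X_mul, coeff_mul]
    simp only [enumeratorSeries, reversalSeries, coeff_mk, enumerator_succ 0 n,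
      sum_involutions_zero_apply_zero_eq]
    simp [coeff_one]

theorem enumeratorSeries_one_eq :
    enumeratorSeries 1 = X * (reversalSeries * enumeratorSeries 1 +
      monomial 3 (Polynomial.X ^ 2) * enumeratorSeries 0) := by
  ext1 n
  cases n with
  | zero => simp [enumeratorSeries, enumerator_zero]
  | succ n =>
    rw [coeff_succ_X_mul, map_add, coeff_mul, coeff_mul, ← Finset.sum_add_distrib]
    simp only [enumeratorSeries, reversalSeries, coeff_mk, enumerator_succ 1 n,
      sum_involutions_one_apply_zero_eq, coeff_monomial, ite_mul, zero_mul]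

theorem one_sub_sq_mul_reversalSeries :
    (1 - X ^ 2) * reversalSeries = C Polynomial.X + X := by
  rw [sub_mul, one_mul]
  ext1 n
  rcases n with - | - | n
  · simp [reversalSeries]
  · simp [reversalSeries, coeff_X_pow_mul']
  · rw [map_sub, show n + 1 + 1 = n + 2 from rfl, coeff_X_pow_mul]
    simp [reversalSeries, coeff_X, show (n + 2 + 1) % 2 = (n + 1) % 2 by omega]

theorem one_sub_two_mul_sq_mul_enumeratorSeries_zero :
    (1 - 2 * X ^ 2) * enumeratorSeries 0 =
      1 - X ^ 2 + X * (C Polynomial.X * enumeratorSeries 0) := by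
  linear_combination (1 - X ^ 2) * enumeratorSeries_zero_eq +
    X * enumeratorSeries 0 * one_sub_sq_mul_reversalSeries

theorem one_sub_two_mul_sq_mul_enumeratorSeries_one :
    (1 - 2 * X ^ 2) * enumeratorSeries 1 =
      X ^ 4 * (1 - X ^ 2) * (C Polynomial.X * (C Polynomial.X * enumeratorSeries 0)) +
        X * (C Polynomial.X * enumeratorSeries 1) := by
  have monomial_eq : monomial 3 (Polynomial.X ^ 2 : ℤ[X]) = C Polynomial.X ^ 2 * X ^ 3 := by
    rw [monomial_eq_C_mul_X_pow, map_pow]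
  linear_combination (1 - X ^ 2) * enumeratorSeries_one_eq +
    X * enumeratorSeries 1 * one_sub_sq_mul_reversalSeries +
    X * (1 - X ^ 2) * enumeratorSeries 0 * monomial_eq

end GeneratingFunction

section XCoeff

open PowerSeries
open scoped Polynomial

variable {R : Type*} [CommSemiring R]

/-- The coefficient of `Polynomial.X ^ k` in a power series over `R[X]`, as a power series
over `R`. -/
noncomputable def xCoeff (k : ℕ) (F : R[X]⟦X⟧) : R⟦X⟧ :=
  mk fun n => (coeff n F).coeff k

theorem xCoeff_add (k : ℕ) (F G : R[X]⟦X⟧) : xCoeff k (F + G) = xCoeff k F + xCoeff k G := by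
  ext n
  simp [xCoeff]

theorem xCoeff_map_C_mul (k : ℕ) (W : R⟦X⟧) (F : R[X]⟦X⟧) :
    xCoeff k (map Polynomial.C W * F) = W * xCoeff k F := by
  ext n
  simp [xCoeff, coeff_mul, Polynomial.finsetSum_coeff]

theorem xCoeff_map_C (k : ℕ) (W : R⟦X⟧) :
    xCoeff k (map Polynomial.C W) = if k = 0 then W else 0 := by
  ext n
  split_ifs with hk <;> simp [xCoeff, Polynomial.coeff_C, hk]

theorem xCoeff_zero_C_X_mul (F : R[X]⟦X⟧) : xCoeff 0 (C Polynomial.X * F) = 0 := by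
  ext n
  simp [xCoeff]

theorem xCoeff_succ_C_X_mul (k : ℕ) (F : R[X]⟦X⟧) :
    xCoeff (k + 1) (C Polynomial.X * F) = xCoeff k F := by
  ext n
  simp [xCoeff]

section Recursion

variable {F G : R[X]⟦X⟧} {W : R⟦X⟧}

theorem mul_xCoeff_zero_of_map_C_mul_eq
    (h : map Polynomial.C W * F = G + X * (C Polynomial.X * F)) :
    W * xCoeff 0 F = xCoeff 0 G := by
  have map_C_X : X = map Polynomial.C (X : R⟦X⟧) := by simp
  rw [← xCoeff_map_C_mul, h, xCoeff_add, map_C_X, xCoeff_map_C_mul, xCoeff_zero_C_X_mul, mul_zero,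
    add_zero]

theorem mul_xCoeff_succ_of_map_C_mul_eq
    (h : map Polynomial.C W * F = G + X * (C Polynomial.X * F)) (k : ℕ) :
    W * xCoeff (k + 1) F = xCoeff (k + 1) G + X * xCoeff k F := by
  have map_C_X : X = map Polynomial.C (X : R⟦X⟧) := by simp
  rw [← xCoeff_map_C_mul, h, xCoeff_add]
  nth_rw 1 [map_C_X]
  rw [xCoeff_map_C_mul, xCoeff_succ_C_X_mul]

end Recursion

end XCoeff

section Coefficients

open PowerSeries
open scoped Polynomial

theorem pow_succ_mul_xCoeff_enumeratorSeries_zero (k : ℕ) :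
    (1 - 2 * X ^ 2) ^ (k + 1) * xCoeff k (enumeratorSeries 0) = X ^ k * (1 - X ^ 2) := by
  have recursion : map Polynomial.C (1 - 2 * X ^ 2 : ℤ⟦X⟧) * enumeratorSeries 0 =
      map Polynomial.C (1 - X ^ 2) + X * (C Polynomial.X * enumeratorSeries 0) := by
    simp only [map_sub, map_mul, map_pow, map_one, map_ofNat, map_X]
    exact one_sub_two_mul_sq_mul_enumeratorSeries_zero
  induction k with
  | zero =>
    rw [zero_add, pow_one, mul_xCoeff_zero_of_map_C_mul_eq recursion, xCoeff_map_C, if_pos rfl,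
      pow_zero, one_mul]
  | succ k ih =>
    rw [pow_succ, mul_assoc, mul_xCoeff_succ_of_map_C_mul_eq recursion, xCoeff_map_C,
      if_neg k.succ_ne_zero, zero_add, mul_left_comm, ih, pow_succ' X k, mul_assoc]

theorem one_sub_two_mul_sq_ne_zero : (1 - 2 * X ^ 2 : ℤ⟦X⟧) ≠ 0 := by
  intro h
  simpa using congrArg constantCoeff h

theorem map_C_mul_enumeratorSeries_one :
    map Polynomial.C (1 - 2 * X ^ 2 : ℤ⟦X⟧) * enumeratorSeries 1 =
      map Polynomial.C (X ^ 4 * (1 - X ^ 2)) *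
          (C Polynomial.X * (C Polynomial.X * enumeratorSeries 0)) +
        X * (C Polynomial.X * enumeratorSeries 1) := by
  simp only [map_sub, map_mul, map_pow, map_one, map_ofNat, map_X]
  exact one_sub_two_mul_sq_mul_enumeratorSeries_one

theorem xCoeff_zero_enumeratorSeries_one : xCoeff 0 (enumeratorSeries 1) = 0 := by
  refine (mul_eq_zero.mp ?_).resolve_left one_sub_two_mul_sq_ne_zero
  rw [mul_xCoeff_zero_of_map_C_mul_eq map_C_mul_enumeratorSeries_one, xCoeff_map_C_mul,
    xCoeff_zero_C_X_mul, mul_zero]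

theorem xCoeff_one_enumeratorSeries_one : xCoeff 1 (enumeratorSeries 1) = 0 := by
  refine (mul_eq_zero.mp ?_).resolve_left one_sub_two_mul_sq_ne_zero
  rw [mul_xCoeff_succ_of_map_C_mul_eq map_C_mul_enumeratorSeries_one, xCoeff_map_C_mul,
    xCoeff_succ_C_X_mul, xCoeff_zero_C_X_mul, xCoeff_zero_enumeratorSeries_one, mul_zero, mul_zero,
    add_zero]

theorem pow_mul_xCoeff_enumeratorSeries_one (k : ℕ) :
    (1 - 2 * X ^ 2) ^ (k + 2) * xCoeff (k + 2) (enumeratorSeries 1) =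
      (k + 1 : ℤ⟦X⟧) * X ^ (k + 4) * (1 - X ^ 2) ^ 2 := by
  have mul_xCoeff_add_two (k : ℕ) : (1 - 2 * X ^ 2) * xCoeff (k + 2) (enumeratorSeries 1) =
      X ^ 4 * (1 - X ^ 2) * xCoeff k (enumeratorSeries 0) +
        X * xCoeff (k + 1) (enumeratorSeries 1) := by
    rw [mul_xCoeff_succ_of_map_C_mul_eq map_C_mul_enumeratorSeries_one, xCoeff_map_C_mul,
      xCoeff_succ_C_X_mul, xCoeff_succ_C_X_mul]
  have pow_mul_avoiding := pow_succ_mul_xCoeff_enumeratorSeries_zero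
  induction k with
  | zero =>
    have h := mul_xCoeff_add_two 0
    rw [xCoeff_one_enumeratorSeries_one] at h
    linear_combination (1 - 2 * X ^ 2) * h + X ^ 4 * (1 - X ^ 2) * pow_mul_avoiding 0
  | succ k ih =>
    push_cast
    linear_combination (1 - 2 * X ^ 2) ^ (k + 2) * mul_xCoeff_add_two (k + 1) +
      X ^ 4 * (1 - X ^ 2) * pow_mul_avoiding (k + 1) + X * ih

/-- The power series `(1 - 2 * X ^ 2) ^ (-d)`. -/
noncomputable def invOneSubTwoMulSqPow (d : ℕ) : ℤ⟦X⟧ :=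
  expand 2 two_ne_zero (rescale 2 (invOneSubPow ℤ d : ℤ⟦X⟧))

theorem pow_mul_invOneSubTwoMulSqPow (d : ℕ) :
    (1 - 2 * X ^ 2) ^ d * invOneSubTwoMulSqPow d = 1 := by
  have h : (1 - X) ^ d * (invOneSubPow ℤ d : ℤ⟦X⟧) = 1 := by
    rw [← invOneSubPow_inv_eq_one_sub_pow]
    exact (invOneSubPow ℤ d).inv_val
  have h_expand := congrArg (fun F => expand 2 two_ne_zero (rescale 2 F)) h
  simp only [map_sub, map_mul, map_pow, map_one, map_ofNat, rescale_X, expand_X] at h_expand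
  exact h_expand

theorem coeff_invOneSubTwoMulSqPow (d i : ℕ) :
    coeff (2 * i) (invOneSubTwoMulSqPow d) = 2 ^ i * ((d + i - 1).choose i : ℤ) := by
  rw [invOneSubTwoMulSqPow, coeff_expand_mul, coeff_rescale]
  congr 1
  cases d with
  | zero =>
    rw [invOneSubPow_zero, Units.val_one, coeff_one]
    cases i <;> simp
  | succ d =>
    rw [invOneSubPow_val_succ_eq_mk_add_choose, coeff_mk, Nat.choose_symm_add,
      Nat.add_right_comm, Nat.add_sub_cancel]

theorem four_nsmul_xCoeff_enumeratorSeries_one (k : ℕ) :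
    4 • xCoeff (k + 2) (enumeratorSeries 1) = (k + 1) • (X ^ (k + 4) *
      (invOneSubTwoMulSqPow (k + 2) + 2 • invOneSubTwoMulSqPow (k + 1) +
        invOneSubTwoMulSqPow k)) := by
  refine mul_left_cancel₀ (pow_ne_zero (k + 2) one_sub_two_mul_sq_ne_zero) ?_
  have inv_mul := pow_mul_invOneSubTwoMulSqPow
  simp only [nsmul_eq_mul]
  push_cast
  -- `2 * (1 - X ^ 2) = 1 + (1 - 2 * X ^ 2)`
  linear_combination 4 * pow_mul_xCoeff_enumeratorSeries_one k -
    (k + 1 : ℤ⟦X⟧) * X ^ (k + 4) * (inv_mul (k + 2) +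
      2 * (1 - 2 * X ^ 2) * inv_mul (k + 1) + (1 - 2 * X ^ 2) ^ 2 * inv_mul k)

theorem iCountOnce231_eq_coeff_xCoeff (n k : ℕ) :
    (iCountOnce231 n k : ℤ) = coeff n (xCoeff k (enumeratorSeries 1)) := by
  rw [xCoeff, enumeratorSeries, coeff_mk, coeff_mk, coeff_enumerator_one]

theorem iCountOnce231_zero (n : ℕ) : iCountOnce231 n 0 = 0 := by
  rw [← Nat.cast_inj (R := ℤ), iCountOnce231_eq_coeff_xCoeff, xCoeff_zero_enumeratorSeries_one,
    map_zero, Nat.cast_zero]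

theorem iCountOnce231_one (n : ℕ) : iCountOnce231 n 1 = 0 := by
  rw [← Nat.cast_inj (R := ℤ), iCountOnce231_eq_coeff_xCoeff, xCoeff_one_enumeratorSeries_one,
    map_zero, Nat.cast_zero]

theorem four_mul_iCountOnce231_add_two (k i : ℕ) :
    4 * (iCountOnce231 (2 * i + (k + 4)) (k + 2) : ℤ) = (k + 1) * 2 ^ i *
      ((k + i + 1).choose i + 2 * (k + i).choose i + (k + i - 1).choose i) := by
  have h := congrArg (coeff (2 * i + (k + 4))) (four_nsmul_xCoeff_enumeratorSeries_one k)
  rw [map_nsmul, ← iCountOnce231_eq_coeff_xCoeff, map_nsmul, coeff_X_pow_mul, map_add, map_add,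
    map_nsmul] at h
  simp only [coeff_invOneSubTwoMulSqPow, nsmul_eq_mul, Nat.add_right_comm k _ i,
    Nat.add_sub_cancel] at h
  push_cast at h ⊢
  linear_combination h

end Coefficients

section Parity

theorem fixedPts_modEq {n : ℕ} {π : Equiv.Perm (Fin n)} (hπ : IsInvolution π) :
    fixedPts π ≡ n [MOD 2] := by
  have h : π ^ 2 ^ 1 = 1 := Equiv.ext hπ
  convert Equiv.Perm.card_compl_support_modEq h using 1
  · rw [fixedPts]
    congr 1
    ext i
    simp
  · exact (Fintype.card_fin n).symm

theorem iCountOnce231_of_odd {n k : ℕ} (h : Odd (n + k)) : iCountOnce231 n k = 0 := by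
  refine Nat.card_eq_zero.mpr (Or.inl ⟨?_⟩)
  rintro ⟨π, hπ, -, rfl⟩
  have := fixedPts_modEq hπ
  rw [Nat.odd_iff] at h
  unfold Nat.ModEq at this
  omega

end Parity

end Pattern231

theorem statement15_general (n k : ℕ) :
    (4 ≤ n → 2 ≤ n - k → Even (n + k) → 4 * (iCountOnce231 n k : ℤ) =
      ((k : ℤ) - 1) * 2 ^ ((n - k) / 2 - 1) *
        ((((n + k) / 2 - 2).choose ((n - k) / 2 - 1) : ℤ) +
          2 * (((n + k) / 2 - 3).choose ((n - k) / 2 - 1) : ℤ) +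
          (((n + k) / 2 - 4).choose ((n - k) / 2 - 1) : ℤ))) ∧
    (Odd (n + k) → iCountOnce231 n k = 0) := by
  refine ⟨fun hn hnk heven => ?_, Pattern231.iCountOnce231_of_odd⟩
  match k with
  | 0 =>
    rw [Pattern231.iCountOnce231_zero, Nat.choose_eq_zero_of_lt (by omega),
      Nat.choose_eq_zero_of_lt (by omega), Nat.choose_eq_zero_of_lt (by omega)]
    simp
  | 1 => simp [Pattern231.iCountOnce231_one]
  | k + 2 =>
    obtain ⟨i, rfl⟩ : ∃ i, n = 2 * i + (k + 4) := ⟨(n - (k + 4)) / 2, by grind⟩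
    have half_sub : (2 * i + (k + 4) - (k + 2)) / 2 - 1 = i := by omega
    have half_add : (2 * i + (k + 4) + (k + 2)) / 2 = k + i + 3 := by omega
    rw [Pattern231.four_mul_iCountOnce231_add_two, half_sub, half_add]
    push_cast
    ring_nf

/-- For all `n ≥ 4`, `0 ≤ k ≤ n` with `n + k` even and `n - k ≥ 6`,
`i_n^k(∅;231) = (k-1) · 2^{(n-k-6)/2} · ( C((n+k)/2 - 2, (n-k)/2 - 1)
  + 2·C((n+k)/2 - 3, (n-k)/2 - 1) + C((n+k)/2 - 4, (n-k)/2 - 1) )` (as integers);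
when `n + k` is odd, `i_n^k(∅;231) = 0`. -/
theorem statement15 (n k : ℕ) (hn : 4 ≤ n) (hk : k ≤ n) (h6 : 6 ≤ n - k) :
    (Even (n + k) → (iCountOnce231 n k : ℤ) =
      ((k : ℤ) - 1) * 2 ^ ((n - k - 6) / 2) *
        ((((n + k) / 2 - 2).choose ((n - k) / 2 - 1) : ℤ) +
          2 * (((n + k) / 2 - 3).choose ((n - k) / 2 - 1) : ℤ) +
          (((n + k) / 2 - 4).choose ((n - k) / 2 - 1) : ℤ))) ∧
    (Odd (n + k) → iCountOnce231 n k = 0) := by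
  obtain ⟨heven_case, hodd_case⟩ := statement15_general n k
  refine ⟨fun heven => ?_, hodd_case⟩
  have half_eq : (n - k) / 2 - 1 = (n - k - 6) / 2 + 2 := by omega
  have h := heven_case hn (by omega) heven
  rw [half_eq, pow_add, ← half_eq] at h
  linarith
end

section
/- For all integers n ≥ 1 and 0 ≤ k ≤ n, the number of involutions of {1,…,n} with exactly k fixed points containing the pattern 231 exactly once equals the number of involutions of {1,…,n} with exactly k fixed points containing the pattern 312 exactly once: i_n^k(∅;231) = i_n^k(∅;312). -/
/-- The number of occurrences of the pattern 312 in a permutation of `Fin n`. -/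
noncomputable def occ312 {n : ℕ} (π : Equiv.Perm (Fin n)) : ℕ :=
  Nat.card {t : Fin n × Fin n × Fin n //
    t.1 < t.2.1 ∧ t.2.1 < t.2.2 ∧ (π t.2.1 < π t.2.2 ∧ π t.2.2 < π t.1)}

/-- `i_n^k(∅;312)`: the number of involutions of `{1, …, n}` with exactly `k` fixed
points containing the pattern 312 exactly once. -/
noncomputable def iCountOnce312 (n k : ℕ) : ℕ :=
  Nat.card {π : Equiv.Perm (Fin n) // IsInvolution π ∧ occ312 π = 1 ∧ fixedPts π = k}

/-- Exchanging positions and values turns an occurrence of a pattern in `π` into one of the inverse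
pattern in `π⁻¹`, and 312 is the inverse of 231. -/
theorem occ312_inv {n : ℕ} (π : Equiv.Perm (Fin n)) : occ312 π⁻¹ = occ231 π := by
  let valuesInOrder : Fin n × Fin n × Fin n ≃ Fin n × Fin n × Fin n :=
    { toFun := fun (a, b, c) => (π c, π a, π b)
      invFun := fun (x, y, z) => (π⁻¹ y, π⁻¹ z, π⁻¹ x)
      left_inv := fun (a, b, c) => by simp only [Equiv.Perm.coe_inv, Equiv.symm_apply_apply]
      right_inv := fun (x, y, z) => by simp only [Equiv.Perm.coe_inv, Equiv.apply_symm_apply] }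
  refine (Nat.card_congr (valuesInOrder.subtypeEquiv ?_)).symm
  rintro ⟨a, b, c⟩
  simp only [valuesInOrder, Equiv.coe_fn_mk, Equiv.Perm.coe_inv, Equiv.symm_apply_apply]
  tauto

theorem IsInvolution.inv_eq {n : ℕ} {π : Equiv.Perm (Fin n)} (hπ : IsInvolution π) : π⁻¹ = π :=
  inv_eq_of_mul_eq_one_left (Equiv.ext hπ)

theorem IsInvolution.occ231_eq_occ312 {n : ℕ} {π : Equiv.Perm (Fin n)} (hπ : IsInvolution π) :
    occ231 π = occ312 π := by
  rw [← occ312_inv, hπ.inv_eq]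

/-- For all `n ≥ 1` and `0 ≤ k ≤ n`, `i_n^k(∅;231) = i_n^k(∅;312)`. -/
theorem statement16 (n k : ℕ) (hn : 1 ≤ n) (hk : k ≤ n) :
    iCountOnce231 n k = iCountOnce312 n k := by
  refine Nat.card_congr (Equiv.subtypeEquivRight fun π => and_congr_right fun hπ => ?_)
  rw [hπ.occ231_eq_occ312]
end

section
/- For every integer n ≥ 5, the total number of involutions of {1,2,…,n} that contain the pattern 231 exactly once equals (n-1)·2^{n-6}, i.e. 64·i_n(∅;231) = (n-1)·2^n. -/
/-- `i_n(∅;231)`: the number of involutions of `{1, …, n}` containing the pattern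
231 exactly once. -/
noncomputable def iCountOnceTotal231 (n : ℕ) : ℕ :=
  Nat.card {π : Equiv.Perm (Fin n) // IsInvolution π ∧ occ231 π = 1}

/-!
Let `f` be an involution of `{0, …, n}` and `m = f 0`, so that the smallest value sits at position
`m`. If that value does not play the `1` of an occurrence of 231, then `f` is decreasing on
`{0, …, m}`, hence is the reversal there, and `f` is the direct sum of this reversal and an
involution `g` of size `n - m`, with all the occurrences in `g`. If it does and the occurrence is
the only one, then `f` begins with the block 4231 and the rest avoids 231.

With `a n` and `b n` the numbers of involutions without and with exactly one occurrence, this gives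
`a (n + 1) = ∑ j ≤ n, a j`, so `a (n + 1) = 2 ^ n`, and `b (n + 4) = ∑ j < n + 4, b j + a n`, whence
`2 * b (n + 5) = (n + 4) * 2 ^ n`.
-/

open Function

section Occurrences

variable {α β : Type*} [LT α] [LT β]

/-- The set of occurrences `(i, j, k)` of the pattern 231 in a function between ordered types. -/
def occurrences231 (f : α → β) : Set (α × α × α) :=
  {t | t.1 < t.2.1 ∧ t.2.1 < t.2.2 ∧ f t.2.2 < f t.1 ∧ f t.1 < f t.2.1}

theorem mem_occurrences231 {f : α → β} {i j k : α} :
    (i, j, k) ∈ occurrences231 f ↔ i < j ∧ j < k ∧ f k < f i ∧ f i < f j :=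
  Iff.rfl

theorem eq_of_occurrences231_eq_singleton {f : α → β} {i j k x y z : α}
    (h : occurrences231 f = {(i, j, k)}) (hxy : x < y) (hyz : y < z) (hzx : f z < f x)
    (hfxy : f x < f y) : x = i ∧ y = j ∧ z = k := by
  have hmem : (x, y, z) ∈ occurrences231 f := mem_occurrences231.2 ⟨hxy, hyz, hzx, hfxy⟩
  simpa only [h, Set.mem_singleton_iff, Prod.mk.injEq] using hmem

theorem lt_of_mem_occurrences231_of_mapsTo {n : ℕ} {f : ℕ → ℕ}
    (hlt : Set.MapsTo f (Set.Iio n) (Set.Iio n)) (hid : ∀ i, n ≤ i → f i = i) {i j k : ℕ}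
    (h : (i, j, k) ∈ occurrences231 f) : k < n := by
  obtain ⟨hij, hjk, hki, -⟩ := mem_occurrences231.1 h
  by_contra! hk
  rw [hid k hk] at hki
  obtain hi | hi := lt_or_ge i n
  · exact hki.not_gt ((hlt hi).trans_le hk)
  · rw [hid i hi] at hki
    omega

end Occurrences

/-- Involutions of `{0, …, n - 1}`, encoded as involutions of `ℕ` that fix every `i ≥ n`, so that
involutions of different sizes live in the same type. -/
structure InvolutionBelow (n : ℕ) (f : ℕ → ℕ) : Prop where
  involutive : Involutive f
  apply_eq_self : ∀ i, n ≤ i → f i = i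

/-- The involutions of `{0, …, n - 1}` with exactly `r` occurrences of 231. -/
def involutionsWith231 (n : ℕ) (r : ℕ∞) : Set (ℕ → ℕ) :=
  {f | InvolutionBelow n f ∧ (occurrences231 f).encard = r}

/-- The smallest value `0`, which an involution `f` takes at position `f 0`, plays the `1` of some
occurrence of 231. -/
def MinInOccurrence231 (f : ℕ → ℕ) : Prop :=
  ∃ i j, (i, j, f 0) ∈ occurrences231 f

/-- The direct sum `s ⊕ g`: `s` on `{0, …, m - 1}`, followed by `g` shifted by `m`. -/
def directSum (m : ℕ) (s g : ℕ → ℕ) (i : ℕ) : ℕ :=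
  if i < m then s i else g (i - m) + m

/-- The decreasing permutation of `{0, …, m}`, extended by the identity. -/
def reversal (m i : ℕ) : ℕ :=
  if i ≤ m then m - i else i

namespace InvolutionBelow

variable {n : ℕ} {f : ℕ → ℕ}

theorem apply_lt_iff (hf : InvolutionBelow n f) {i : ℕ} : f i < n ↔ i < n := by
  have apply_lt {i : ℕ} (hi : i < n) : f i < n := by
    by_contra! hge
    have := hf.apply_eq_self _ hge
    rw [hf.involutive] at this
    omega
  exact ⟨fun h => hf.involutive i ▸ apply_lt h, apply_lt⟩

theorem lt_of_mem_occurrences231 (hf : InvolutionBelow n f) {i j k : ℕ}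
    (h : (i, j, k) ∈ occurrences231 f) : k < n :=
  lt_of_mem_occurrences231_of_mapsTo (fun _ => hf.apply_lt_iff.2) hf.apply_eq_self h

/-- The only permutation of size at most `3` containing 231 is 231 itself, not an involution. -/
theorem four_le_of_mem_occurrences231 (hf : InvolutionBelow n f) {i j k : ℕ}
    (h : (i, j, k) ∈ occurrences231 f) : 4 ≤ n := by
  have hk := hf.lt_of_mem_occurrences231 h
  obtain ⟨hij, hjk, hki, hfij⟩ := mem_occurrences231.1 h
  have hj := hf.apply_lt_iff.2 (hjk.trans hk)
  by_contra! hn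
  obtain ⟨rfl, rfl⟩ : i = 0 ∧ j = 1 := by omega
  have h0 : f 0 = 1 := by omega
  have h1 : f 1 = 0 := h0 ▸ hf.involutive 0
  omega

end InvolutionBelow

section DirectSum

variable {m n : ℕ} {s g f : ℕ → ℕ}

theorem directSum_of_lt {i : ℕ} (hi : i < m) : directSum m s g i = s i :=
  if_pos hi

theorem directSum_add (i : ℕ) : directSum m s g (i + m) = g i + m := by
  simp [directSum]

theorem directSum_injective (m : ℕ) (s : ℕ → ℕ) : Injective (directSum m s) := by
  intro g g' h
  funext i
  simpa only [directSum_add, Nat.add_right_cancel_iff] using congrFun h (i + m)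

theorem lt_or_exists_eq_add (m i : ℕ) : i < m ∨ ∃ t, i = t + m :=
  (lt_or_ge i m).imp_right fun h => ⟨i - m, (Nat.sub_add_cancel h).symm⟩

theorem involutionBelow_directSum (hs : InvolutionBelow m s) (hg : InvolutionBelow n g) :
    InvolutionBelow (n + m) (directSum m s g) where
  involutive i := by
    obtain hi | ⟨t, rfl⟩ := lt_or_exists_eq_add m i
    · rw [directSum_of_lt hi, directSum_of_lt (hs.apply_lt_iff.2 hi), hs.involutive]
    · rw [directSum_add, directSum_add, hg.involutive]
  apply_eq_self i hi := by
    obtain ⟨t, rfl⟩ := Nat.exists_eq_add_of_le' (le_of_add_le_right hi)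
    rw [directSum_add, hg.apply_eq_self t (by omega)]

theorem InvolutionBelow.exists_eq_directSum (hf : InvolutionBelow (n + m) f)
    (hs : InvolutionBelow m s) (hfs : ∀ i < m, f i = s i) :
    ∃ g, InvolutionBelow n g ∧ f = directSum m s g := by
  have le_apply (t : ℕ) : m ≤ f (t + m) := by
    by_contra! hlt
    have := hs.apply_lt_iff.2 hlt
    rw [← hfs _ hlt, hf.involutive] at this
    omega
  have sub_add (t : ℕ) : f (t + m) - m + m = f (t + m) := Nat.sub_add_cancel (le_apply t)
  refine ⟨fun t => f (t + m) - m, ⟨fun t => ?_, fun t ht => ?_⟩, funext fun i => ?_⟩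
  · simp only [sub_add, hf.involutive _, Nat.add_sub_cancel]
  · simp only [hf.apply_eq_self (t + m) (by omega), Nat.add_sub_cancel]
  · obtain hi | ⟨t, rfl⟩ := lt_or_exists_eq_add m i
    · rw [directSum_of_lt hi, hfs i hi]
    · rw [directSum_add, sub_add]

theorem occurrences231_directSum (hs : InvolutionBelow m s) (g : ℕ → ℕ) :
    occurrences231 (directSum m s g) =
      occurrences231 s ∪ (· + (m, m, m)) '' occurrences231 g := by
  ext ⟨i, j, k⟩
  constructor
  · intro h
    obtain ⟨hij, hjk, hki, hfij⟩ := mem_occurrences231.1 h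
    obtain hk | ⟨c, rfl⟩ := lt_or_exists_eq_add m k
    · rw [directSum_of_lt hk, directSum_of_lt (by omega)] at hki
      rw [directSum_of_lt (by omega), directSum_of_lt (by omega)] at hfij
      exact Or.inl ⟨hij, hjk, hki, hfij⟩
    obtain hi | ⟨a, rfl⟩ := lt_or_exists_eq_add m i
    · have := hs.apply_lt_iff.2 hi
      rw [directSum_add, directSum_of_lt hi] at hki
      omega
    obtain ⟨b, rfl⟩ : ∃ b, j = b + m := Nat.exists_eq_add_of_le' (by omega)
    simp only [directSum_add] at hki hfij
    exact Or.inr ⟨(a, b, c), mem_occurrences231.2 (by omega), rfl⟩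
  · rintro (h | ⟨⟨a, b, c⟩, h, habc⟩)
    · have hk := hs.lt_of_mem_occurrences231 h
      obtain ⟨hij, hjk, hki, hfij⟩ := mem_occurrences231.1 h
      rw [mem_occurrences231, directSum_of_lt hk, directSum_of_lt (by omega),
        directSum_of_lt (by omega)]
      exact ⟨hij, hjk, hki, hfij⟩
    · obtain ⟨rfl, rfl, rfl⟩ : a + m = i ∧ b + m = j ∧ c + m = k := by simpa using habc
      simpa [mem_occurrences231, directSum_add] using h

theorem encard_occurrences231_directSum (hs : InvolutionBelow m s) (g : ℕ → ℕ) :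
    (occurrences231 (directSum m s g)).encard =
      (occurrences231 s).encard + (occurrences231 g).encard := by
  rw [occurrences231_directSum hs, Set.encard_union_eq,
    (add_left_injective (m, m, m)).encard_image]
  refine Set.disjoint_left.2 ?_
  rintro - h ⟨⟨a, b, c⟩, -, rfl⟩
  have : c + m < m := hs.lt_of_mem_occurrences231 h
  omega

end DirectSum

section Reversal

theorem involutionBelow_reversal (m : ℕ) : InvolutionBelow (m + 1) (reversal m) where
  involutive i := by unfold reversal; split_ifs <;> omega
  apply_eq_self i hi := if_neg (by omega)

theorem occurrences231_reversal (m : ℕ) : occurrences231 (reversal m) = ∅ := by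
  refine Set.eq_empty_of_forall_notMem fun ⟨i, j, k⟩ h => ?_
  have hk := (involutionBelow_reversal m).lt_of_mem_occurrences231 h
  obtain ⟨hij, hjk, -, hfij⟩ := mem_occurrences231.1 h
  simp only [reversal] at hfij
  split_ifs at hfij <;> omega

theorem eq_sub_of_strictAntiOn {f : ℕ → ℕ} {m : ℕ} (hf : StrictAntiOn f (Set.Iic m))
    (h0 : f 0 ≤ m) {i : ℕ} (hi : i ≤ m) : f i = m - i := by
  have apply_add_add_le (i d : ℕ) (h : i + d ≤ m) : f (i + d) + d ≤ f i := by
    induction d with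
    | zero => rfl
    | succ d ih =>
      have : f (i + (d + 1)) < f (i + d) :=
        hf (Set.mem_Iic.2 (by omega)) (Set.mem_Iic.2 h) (by omega)
      have := ih (by omega)
      omega
  have upper : f (0 + i) + i ≤ f 0 := apply_add_add_le 0 i (by omega)
  have lower : f (i + (m - i)) + (m - i) ≤ f i := apply_add_add_le i (m - i) (by omega)
  rw [zero_add] at upper
  omega

variable {f : ℕ → ℕ}

theorem strictAntiOn_of_not_minInOccurrence231 (hf : Involutive f)
    (h : ¬ MinInOccurrence231 f) : StrictAntiOn f (Set.Iic (f 0)) := by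
  intro i hi j hj hij
  rw [Set.mem_Iic] at hi hj
  have hf0 : f (f 0) = 0 := hf 0
  have hpos : 0 < f i := by
    refine Nat.pos_of_ne_zero fun hfi => ?_
    have : i = f 0 := hf.injective (hfi.trans hf0.symm)
    omega
  by_contra! hle
  have hlt : f i < f j := hle.lt_of_ne (hf.injective.ne hij.ne)
  have hj0 : j ≠ f 0 := by rintro rfl; omega
  exact h ⟨i, j, mem_occurrences231.2 ⟨hij, by omega, by omega, hlt⟩⟩

theorem apply_eq_reversal_of_not_minInOccurrence231 (hf : Involutive f)
    (h : ¬ MinInOccurrence231 f) (i : ℕ) (hi : i < f 0 + 1) : f i = reversal (f 0) i := by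
  have hi' : i ≤ f 0 := by omega
  rw [reversal, if_pos hi',
    eq_sub_of_strictAntiOn (strictAntiOn_of_not_minInOccurrence231 hf h) le_rfl hi']

end Reversal

section Block4231

theorem involutionBelow_swap_zero_three : InvolutionBelow 4 (Equiv.swap 0 3) where
  involutive := Equiv.swap_apply_self 0 3
  apply_eq_self i hi := Equiv.swap_apply_of_ne_of_ne (by omega) (by omega)

theorem occurrences231_swap_zero_three :
    occurrences231 (Equiv.swap 0 3 : ℕ → ℕ) = {(1, 2, 3)} := by
  ext ⟨i, j, k⟩
  simp only [mem_occurrences231, Equiv.swap_apply_def, Set.mem_singleton_iff, Prod.mk.injEq]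
  split_ifs <;> omega

variable {f : ℕ → ℕ} {i j : ℕ}

theorem le_apply_zero_of_occurrences231_eq_singleton (hf : Involutive f)
    (h : occurrences231 f = {(i, j, f 0)}) {x : ℕ} (hx : x < f 0) : f x ≤ f 0 := by
  by_contra! hlt
  have hx0 : 0 < x := Nat.pos_of_ne_zero fun hx0 => by simp [hx0] at hlt
  have := eq_of_occurrences231_eq_singleton h hx0 (hx.trans hlt) (by rwa [hf]) hlt
  omega

/-- The value `1` can only be taken at position `i`, and `i` can only be `1`: anything else yields a
second occurrence. -/
theorem eq_one_of_occurrences231_eq_singleton (hf : Involutive f)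
    (h : occurrences231 f = {(i, j, f 0)}) : i = 1 ∧ f 1 = 1 := by
  obtain ⟨hij, hj, hfi, hfij⟩ : i < j ∧ j < f 0 ∧ f (f 0) < f i ∧ f i < f j :=
    mem_occurrences231.1 (h ▸ Set.mem_singleton _)
  have hf0 : f (f 0) = 0 := hf 0
  have hf1 : f (f 1) = 1 := hf 1
  have hfi1 : f i = 1 := by
    by_contra hne
    have h1j : f 1 ≤ j := by
      by_contra! hlt
      have := eq_of_occurrences231_eq_singleton h hij hlt (by omega) hfij
      exact one_ne_zero (hf.injective this.2.2)
    have h1j' : f 1 ≠ j := fun heq => by rw [← heq] at hfij; omega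
    have := eq_of_occurrences231_eq_singleton h (show f 1 < j by omega) hj (by omega) (by omega)
    exact hne (this.1 ▸ hf1)
  have h1i : f 1 = i := hfi1 ▸ hf i
  suffices i = 1 from ⟨this, h1i.trans this⟩
  have hi0 : i ≠ 0 := by rintro rfl; omega
  by_contra hi1
  have hfj : f j ≠ i := fun hji => by
    have : j = f i := hji ▸ (hf j).symm
    omega
  obtain hlt | hlt := hfj.lt_or_gt
  · have := eq_of_occurrences231_eq_singleton h (show 1 < f j by omega)
      (show f j < f 0 by omega) (by omega) (by rw [hf]; omega)
    omega
  · have := eq_of_occurrences231_eq_singleton h (show 1 < j by omega) hj (by omega) (by omega)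
    omega

theorem apply_eq_swap_of_occurrences231_eq_singleton (hf : Involutive f)
    (h : occurrences231 f = {(i, j, f 0)}) (x : ℕ) (hx : x < 4) :
    f x = Equiv.swap 0 3 x := by
  obtain ⟨rfl, hf1⟩ := eq_one_of_occurrences231_eq_singleton hf h
  obtain ⟨hij, hj, -, hfij⟩ : 1 < j ∧ j < f 0 ∧ f (f 0) < f 1 ∧ f 1 < f j :=
    mem_occurrences231.1 (h ▸ Set.mem_singleton _)
  have hf0 : f (f 0) = 0 := hf 0
  have eq_j {y : ℕ} (hy : 1 < y) (hy' : y < f 0) : y = j := by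
    have hfy0 : f y ≠ 0 := fun hfy => hy'.ne (hf.injective (hfy.trans hf0.symm))
    have hfy1 : f y ≠ 1 := fun hfy => hy.ne' (hf.injective (hfy.trans hf1.symm))
    exact (eq_of_occurrences231_eq_singleton h hy hy' (by omega) (by omega)).2.1
  obtain rfl : 2 = j := eq_j one_lt_two (by omega)
  have hm : f 0 = 3 := by
    by_contra hne
    have : 3 = 2 := eq_j (by omega) (by omega)
    omega
  have hf3 : f 3 = 0 := hm ▸ hf0
  have hf2 : f 2 = 2 := by
    have hle : f 2 ≤ f 0 := le_apply_zero_of_occurrences231_eq_singleton hf h hj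
    have : f 2 ≠ f 0 := hf.injective.ne two_ne_zero
    omega
  interval_cases x <;> simp [hm, hf1, hf2, hf3, Equiv.swap_apply_def]

end Block4231

section Counting

theorem involutionsWith231_diff_minInOccurrence231 (n : ℕ) (r : ℕ∞) :
    involutionsWith231 (n + 1) r \ {f | MinInOccurrence231 f} =
      ⋃ m ∈ Finset.range (n + 1),
        directSum (m + 1) (reversal m) '' involutionsWith231 (n - m) r := by
  ext f
  simp only [Set.mem_iUnion, Finset.mem_range, exists_prop]
  constructor
  · rintro ⟨⟨hf, hr⟩, hmin⟩
    have h0 : f 0 < n + 1 := hf.apply_lt_iff.2 n.succ_pos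
    have hsize : n + 1 = n - f 0 + (f 0 + 1) := by omega
    obtain ⟨g, hg, hfg⟩ := (hsize ▸ hf).exists_eq_directSum (involutionBelow_reversal (f 0))
      (apply_eq_reversal_of_not_minInOccurrence231 hf.involutive hmin)
    rw [hfg, encard_occurrences231_directSum (involutionBelow_reversal _),
      occurrences231_reversal, Set.encard_empty, zero_add] at hr
    exact ⟨f 0, h0, g, ⟨hg, hr⟩, hfg.symm⟩
  · rintro ⟨m, hm, g, ⟨hg, hr⟩, rfl⟩
    have hrev := involutionBelow_reversal m
    have hsize : n - m + (m + 1) = n + 1 := by omega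
    refine ⟨⟨hsize ▸ involutionBelow_directSum hrev hg, ?_⟩, ?_⟩
    · rw [encard_occurrences231_directSum hrev, occurrences231_reversal, Set.encard_empty,
        zero_add, hr]
    · rintro ⟨i, j, h⟩
      rw [occurrences231_directSum hrev, occurrences231_reversal, Set.empty_union] at h
      obtain ⟨⟨a, b, c⟩, -, habc⟩ := h
      have hc : c + (m + 1) = directSum (m + 1) (reversal m) g 0 :=
        (Prod.ext_iff.1 (Prod.ext_iff.1 habc).2).2
      rw [directSum_of_lt m.succ_pos, reversal, if_pos m.zero_le] at hc
      omega

theorem involutionsWith231_zero_inter_minInOccurrence231 (n : ℕ) :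
    involutionsWith231 n 0 ∩ {f | MinInOccurrence231 f} = ∅ := by
  refine Set.eq_empty_of_forall_notMem ?_
  rintro f ⟨⟨-, hr⟩, i, j, h⟩
  rw [Set.encard_eq_zero.1 hr] at h
  exact h

theorem involutionsWith231_one_inter_minInOccurrence231 (n : ℕ) :
    involutionsWith231 (n + 4) 1 ∩ {f | MinInOccurrence231 f} =
      directSum 4 (Equiv.swap 0 3) '' involutionsWith231 n 0 := by
  have hswap := involutionBelow_swap_zero_three
  ext f
  constructor
  · rintro ⟨⟨hf, hr⟩, i, j, h⟩
    have hocc : occurrences231 f = {(i, j, f 0)} := by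
      obtain ⟨t, ht⟩ := Set.encard_eq_one.1 hr
      rw [ht, Set.mem_singleton_iff] at h
      rw [ht, h]
    obtain ⟨g, hg, hfg⟩ := hf.exists_eq_directSum hswap
      (apply_eq_swap_of_occurrences231_eq_singleton hf.involutive hocc)
    rw [hfg, encard_occurrences231_directSum hswap, occurrences231_swap_zero_three,
      Set.encard_singleton] at hr
    have hg0 : (occurrences231 g).encard = 0 :=
      (ENat.add_right_injective_of_ne_top ENat.one_ne_top) (hr.trans (add_zero 1).symm)
    exact ⟨g, ⟨hg, hg0⟩, hfg.symm⟩
  · rintro ⟨g, ⟨hg, hr⟩, rfl⟩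
    refine ⟨⟨involutionBelow_directSum hswap hg, ?_⟩, 1, 2, ?_⟩
    · rw [encard_occurrences231_directSum hswap, occurrences231_swap_zero_three,
        Set.encard_singleton, hr, add_zero]
    · have h0 : directSum 4 (Equiv.swap 0 3) g 0 = 3 := directSum_of_lt four_pos
      rw [h0, occurrences231_directSum hswap, occurrences231_swap_zero_three]
      exact Or.inl rfl

theorem encard_involutionsWith231_diff_minInOccurrence231 (n : ℕ) (r : ℕ∞) :
    (involutionsWith231 (n + 1) r \ {f | MinInOccurrence231 f}).encard =
      ∑ k ∈ Finset.range (n + 1), (involutionsWith231 k r).encard := by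
  have hdisj : (Finset.range (n + 1) : Set ℕ).PairwiseDisjoint fun m =>
      directSum (m + 1) (reversal m) '' involutionsWith231 (n - m) r := by
    refine fun m _ m' _ hne => Set.disjoint_left.2 ?_
    rintro - ⟨g, -, rfl⟩ ⟨g', -, h⟩
    have h0 : m' = m := by simpa [directSum, reversal] using congrFun h 0
    exact hne h0.symm
  calc (involutionsWith231 (n + 1) r \ {f | MinInOccurrence231 f}).encard
      = ∑ m ∈ Finset.range (n + 1), (involutionsWith231 (n - m) r).encard := by
        rw [involutionsWith231_diff_minInOccurrence231]
        simpa only [(directSum_injective _ _).encard_image, SetLike.mem_coe,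
          finsum_mem_finset_eq_sum] using
          (Finset.range (n + 1)).finite_toSet.encard_biUnion hdisj
    _ = ∑ k ∈ Finset.range (n + 1), (involutionsWith231 k r).encard :=
        Finset.sum_flip fun k => (involutionsWith231 k r).encard

theorem encard_involutionsWith231_succ (n : ℕ) (r : ℕ∞) :
    (involutionsWith231 (n + 1) r).encard =
      ∑ k ∈ Finset.range (n + 1), (involutionsWith231 k r).encard +
        (involutionsWith231 (n + 1) r ∩ {f | MinInOccurrence231 f}).encard := by
  rw [← encard_involutionsWith231_diff_minInOccurrence231, Set.encard_sdiff_add_encard_inter]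

theorem involutionsWith231_zero_zero : involutionsWith231 0 0 = {id} := by
  refine Set.eq_singleton_iff_unique_mem.2 ⟨⟨⟨fun _ => rfl, fun _ _ => rfl⟩, ?_⟩, ?_⟩
  · refine Set.encard_eq_zero.2 (Set.eq_empty_of_forall_notMem fun ⟨i, j, k⟩ h => ?_)
    obtain ⟨hij, hjk, hki, -⟩ := mem_occurrences231.1 h
    exact (hij.trans hjk).not_gt hki
  · exact fun f hf => funext fun i => hf.1.apply_eq_self i i.zero_le

theorem encard_involutionsWith231_succ_zero (n : ℕ) :
    (involutionsWith231 (n + 1) 0).encard = 2 ^ n := by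
  have recurrence (n : ℕ) : (involutionsWith231 (n + 1) 0).encard =
      ∑ k ∈ Finset.range (n + 1), (involutionsWith231 k 0).encard := by
    rw [encard_involutionsWith231_succ, involutionsWith231_zero_inter_minInOccurrence231,
      Set.encard_empty, add_zero]
  induction n with
  | zero => simp [recurrence, involutionsWith231_zero_zero]
  | succ n ih => rw [recurrence, Finset.sum_range_succ, ← recurrence, ih, pow_succ, mul_two]

theorem involutionsWith231_one_eq_empty {n : ℕ} (hn : n < 4) : involutionsWith231 n 1 = ∅ := by
  refine Set.eq_empty_of_forall_notMem fun f ⟨hf, hr⟩ => ?_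
  obtain ⟨⟨i, j, k⟩, ht⟩ := Set.encard_eq_one.1 hr
  exact hn.not_ge (hf.four_le_of_mem_occurrences231 (ht ▸ Set.mem_singleton _))

theorem encard_involutionsWith231_add_four_one (n : ℕ) :
    (involutionsWith231 (n + 4) 1).encard =
      ∑ k ∈ Finset.range (n + 4), (involutionsWith231 k 1).encard +
        (involutionsWith231 n 0).encard := by
  rw [encard_involutionsWith231_succ, involutionsWith231_one_inter_minInOccurrence231,
    (directSum_injective _ _).encard_image]

theorem two_mul_sum_encard_involutionsWith231_one (n : ℕ) :
    2 * ∑ k ∈ Finset.range (n + 5), (involutionsWith231 k 1).encard = (n + 2) * 2 ^ n := by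
  induction n with
  | zero =>
    have hsum : ∑ k ∈ Finset.range 4, (involutionsWith231 k 1).encard = 0 :=
      Finset.sum_eq_zero fun k hk => by
        rw [involutionsWith231_one_eq_empty (Finset.mem_range.1 hk), Set.encard_empty]
    rw [Finset.sum_range_succ, encard_involutionsWith231_add_four_one 0, zero_add, hsum,
      involutionsWith231_zero_zero, Set.encard_singleton]
    norm_num
  | succ n ih =>
    rw [add_right_comm, Finset.sum_range_succ, encard_involutionsWith231_add_four_one (n + 1),
      encard_involutionsWith231_succ_zero, add_right_comm n 1 4]
    calc _ = 2 * (2 * ∑ k ∈ Finset.range (n + 5), (involutionsWith231 k 1).encard) + 2 * 2 ^ n := by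
          ring
      _ = (↑(n + 1) + 2) * 2 ^ (n + 1) := by
          rw [ih]
          push_cast
          ring

theorem two_mul_encard_involutionsWith231_add_five_one (n : ℕ) :
    2 * (involutionsWith231 (n + 5) 1).encard = (n + 4) * 2 ^ n := by
  rw [encard_involutionsWith231_add_four_one (n + 1), encard_involutionsWith231_succ_zero,
    add_right_comm, mul_add, two_mul_sum_encard_involutionsWith231_one]
  ring

end Counting

section PermFin

variable {n : ℕ}

/-- A permutation of `Fin n`, extended to `ℕ` by the identity. -/
def extendToNat (π : Equiv.Perm (Fin n)) : ℕ → ℕ :=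
  π.extendDomain Fin.equivSubtype

theorem extendToNat_val (π : Equiv.Perm (Fin n)) (i : Fin n) : extendToNat π i = π i :=
  π.extendDomain_apply_image Fin.equivSubtype i

theorem extendToNat_of_le (π : Equiv.Perm (Fin n)) {i : ℕ} (hi : n ≤ i) : extendToNat π i = i :=
  π.extendDomain_apply_not_subtype Fin.equivSubtype hi.not_gt

theorem extendToNat_injective : Injective (extendToNat (n := n)) :=
  DFunLike.coe_injective.comp (Equiv.Perm.extendDomainHom_injective Fin.equivSubtype)

theorem involutionBelow_extendToNat_iff {π : Equiv.Perm (Fin n)} :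
    InvolutionBelow n (extendToNat π) ↔ IsInvolution π := by
  refine ⟨fun h i => Fin.ext ?_, fun h => ⟨fun i => ?_, fun i => extendToNat_of_le π⟩⟩
  · rw [← extendToNat_val, ← extendToNat_val, h.involutive]
  · obtain hi | hi := lt_or_ge i n
    · lift i to Fin n using hi
      rw [extendToNat_val, extendToNat_val, h]
    · rw [extendToNat_of_le π hi, extendToNat_of_le π hi]

theorem InvolutionBelow.exists_extendToNat_eq {f : ℕ → ℕ} (hf : InvolutionBelow n f) :
    ∃ π : Equiv.Perm (Fin n), extendToNat π = f := by
  let toFin (i : Fin n) : Fin n := ⟨f i, hf.apply_lt_iff.2 i.isLt⟩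
  have toFin_involutive : Involutive toFin := fun i => Fin.ext (hf.involutive i)
  refine ⟨toFin_involutive.toPerm, funext fun i => ?_⟩
  obtain hi | hi := lt_or_ge i n
  · exact extendToNat_val _ ⟨i, hi⟩
  · rw [extendToNat_of_le _ hi, hf.apply_eq_self i hi]

theorem occurrences231_extendToNat (π : Equiv.Perm (Fin n)) :
    occurrences231 (extendToNat π) =
      Prod.map Fin.val (Prod.map Fin.val Fin.val) '' occurrences231 π := by
  ext ⟨i, j, k⟩
  constructor
  · intro h
    have hlt : Set.MapsTo (extendToNat π) (Set.Iio n) (Set.Iio n) := fun i hi =>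
      (extendToNat_val π ⟨i, hi⟩).trans_lt (π ⟨i, hi⟩).isLt
    have hk : k < n := lt_of_mem_occurrences231_of_mapsTo hlt (fun _ => extendToNat_of_le π) h
    have hj : j < n := h.2.1.trans hk
    have hi : i < n := h.1.trans hj
    lift i to Fin n using hi
    lift j to Fin n using hj
    lift k to Fin n using hk
    simp only [mem_occurrences231, extendToNat_val] at h
    exact ⟨(i, j, k), h, rfl⟩
  · rintro ⟨⟨a, b, c⟩, h, habc⟩
    obtain ⟨rfl, rfl, rfl⟩ : (a : ℕ) = i ∧ (b : ℕ) = j ∧ (c : ℕ) = k := by simpa using habc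
    simpa only [mem_occurrences231, extendToNat_val, Fin.lt_def] using h

theorem encard_occurrences231_extendToNat (π : Equiv.Perm (Fin n)) :
    (occurrences231 (extendToNat π)).encard = occ231 π := by
  have hinj : Injective (Fin.val (n := n)) := Fin.val_injective
  calc (occurrences231 (extendToNat π)).encard
      = (occurrences231 π).encard := by
        rw [occurrences231_extendToNat, (hinj.prodMap (hinj.prodMap hinj)).encard_image]
    _ = occ231 π := (Set.toFinite _).cast_ncard_eq.symm

theorem involutionsWith231_eq_image_extendToNat (n r : ℕ) :
    involutionsWith231 n r =
      extendToNat '' {π : Equiv.Perm (Fin n) | IsInvolution π ∧ occ231 π = r} := by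
  ext f
  constructor
  · rintro ⟨hf, hr⟩
    obtain ⟨π, rfl⟩ := hf.exists_extendToNat_eq
    rw [encard_occurrences231_extendToNat] at hr
    exact ⟨π, ⟨involutionBelow_extendToNat_iff.1 hf, Nat.cast_injective hr⟩, rfl⟩
  · rintro ⟨π, ⟨hπ, hr⟩, rfl⟩
    exact ⟨involutionBelow_extendToNat_iff.2 hπ, by rw [encard_occurrences231_extendToNat, hr]⟩

theorem encard_involutionsWith231_one (n : ℕ) :
    (involutionsWith231 n 1).encard = iCountOnceTotal231 n := by
  rw [← Nat.cast_one, involutionsWith231_eq_image_extendToNat, extendToNat_injective.encard_image]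
  exact (Set.toFinite _).cast_ncard_eq.symm

end PermFin

/-- For every `n ≥ 5`, `i_n(∅;231) = (n-1) · 2^{n-6}`, i.e.
`64 · i_n(∅;231) = (n-1) · 2^n`. -/
theorem statement17 (n : ℕ) (hn : 5 ≤ n) :
    64 * iCountOnceTotal231 n = (n - 1) * 2 ^ n := by
  obtain ⟨k, rfl⟩ : ∃ k, n = k + 5 := Nat.exists_eq_add_of_le' hn
  have htwo : 2 * iCountOnceTotal231 (k + 5) = (k + 4) * 2 ^ k := by
    have := two_mul_encard_involutionsWith231_add_five_one k
    rw [encard_involutionsWith231_one] at this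
    exact_mod_cast this
  calc 64 * iCountOnceTotal231 (k + 5) = 32 * (2 * iCountOnceTotal231 (k + 5)) := by ring
    _ = (k + 4) * 2 ^ (k + 5) := by rw [htwo]; ring
    _ = (k + 5 - 1) * 2 ^ (k + 5) := rfl
end

section
/- For all integers n ≥ 3 and 0 ≤ k ≤ n with n + k even, the number of involutions of {1,2,…,n} with exactly k fixed points that contain the pattern 321 exactly once equals (k(k+3)/(n+1))·C(n+1, (n-k)/2 - 1), i.e. (n+1)·i_n^k(∅;321) = k(k+3)·C(n+1, (n-k)/2 - 1); when n + k is odd this number is 0. -/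
/-- The number of occurrences of the pattern 321 in a permutation of `Fin n`. -/
noncomputable def occ321 {n : ℕ} (π : Equiv.Perm (Fin n)) : ℕ :=
  Nat.card {t : Fin n × Fin n × Fin n //
    t.1 < t.2.1 ∧ t.2.1 < t.2.2 ∧ (π t.2.2 < π t.2.1 ∧ π t.2.1 < π t.1)}

/-- `i_n^k(∅;321)`: the number of involutions of `{1, …, n}` with exactly `k` fixed
points containing the pattern 321 exactly once. -/
noncomputable def iCountOnce321 (n k : ℕ) : ℕ :=
  Nat.card {π : Equiv.Perm (Fin n) // IsInvolution π ∧ occ321 π = 1 ∧ fixedPts π = k}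

/-!
View an involution as a set of arcs (its 2-cycles, each with an opener and a closer) and fixed
points. Two nested arcs already produce two occurrences of 321, so an involution with a single
occurrence is nonnesting. In a nonnesting involution every occurrence consists of the opener of an
arc, a fixed point `b` and the closer of an arc, where both arcs pass over `b`. Hence 321 occurs
`∑ (number of arcs over b) ^ 2` times, which is `1` exactly when `∑ (number of arcs over b)` is.

Reading a nonnesting involution from its largest element down, the pending closers form a queue: an
opener has to be matched with the largest of them. The involution is thus determined by the types of
its elements, and these form a lattice path whose up, down and level steps are the closers, openers
and fixed points; the height of a level step is the number of arcs over the fixed point.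
Paths in which these heights add up to `1` are counted by `k * ballot n (k + 2)`, where `ballot`
has the closed form of the ballot theorem.
-/

open Finset
open Equiv (Perm swap)

/-- The ballot numbers: `ballot m h` is the number of lattice paths with `m` steps `±1` from height
`h` to height `0` that never go below height `0`. -/
def ballot : ℕ → ℕ → ℕ
  | 0, 0 => 1
  | 0, _ + 1 => 0
  | m + 1, 0 => ballot m 1
  | m + 1, h + 1 => ballot m (h + 2) + ballot m h

theorem ballot_eq_zero {m h : ℕ} (hne : ∀ i, m ≠ h + 2 * i) : ballot m h = 0 := by
  induction m generalizing h with
  | zero =>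
    cases h with
    | zero => exact absurd rfl (hne 0)
    | succ h => rfl
  | succ m ih =>
    have up : ballot m (h + 1) = 0 := ih fun i hi => hne (i + 1) (by lia)
    cases h with
    | zero => exact up
    | succ h =>
      have down : ballot m h = 0 := ih fun i hi => hne i (by lia)
      simp only [ballot, up, down]

theorem ballot_self (m : ℕ) : ballot m m = 1 := by
  induction m with
  | zero => rfl
  | succ m ih => rw [ballot, ballot_eq_zero (by lia), ih]

theorem succ_mul_ballot {m h i : ℕ} (hm : m = h + 2 * i) :
    (m + 1) * ballot m h = (h + 1) * (m + 1).choose i := by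
  induction m generalizing h i with
  | zero =>
    obtain ⟨rfl, rfl⟩ : h = 0 ∧ i = 0 := by lia
    rfl
  | succ m ih =>
    cases i with
    | zero => rw [show h = m + 1 by lia, ballot_self, Nat.choose_zero_right]
    | succ i =>
      have step : (m + 1) * ballot (m + 1) h =
          (h + 2) * (m + 1).choose i + h * (m + 1).choose (i + 1) := by
        have up := ih (h := h + 1) (i := i) (by lia)
        cases h with
        | zero => simpa [ballot] using up
        | succ h =>
          have down := ih (h := h) (i := i + 1) (by lia)
          rw [ballot]
          linear_combination up + down
      have pascal : (m + 2).choose (i + 1) = (m + 1).choose i + (m + 1).choose (i + 1) :=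
        Nat.choose_succ_succ ..
      have absorb : (m + 1).choose (i + 1) * (i + 1) = (m + 1).choose i * (h + i + 2) := by
        rw [Nat.choose_succ_right_eq, show m + 1 - i = h + i + 2 by lia]
      obtain rfl : m = h + 2 * i + 1 := by lia
      refine Nat.eq_of_mul_eq_mul_left (by lia : 0 < h + 2 * i + 2) ?_
      rw [pascal]
      linear_combination (h + 2 * i + 3) * step + 2 * absorb.symm

/-- `levelPaths m h c k` is the number of lattice paths with `m` steps `1`, `0` or `-1` from height
`h` to height `0` that never go below height `0` and have `k` level steps, the heights of which add
up to `c`. -/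
def levelPaths : ℕ → ℕ → ℕ → ℕ → ℕ
  | 0, h, c, k => if h = 0 ∧ c = 0 ∧ k = 0 then 1 else 0
  | m + 1, h, c, k =>
    levelPaths m (h + 1) c k + (if h ≤ c ∧ k ≠ 0 then levelPaths m h (c - h) (k - 1) else 0) +
      if h = 0 then 0 else levelPaths m (h - 1) c k

-- With all level steps at height `0`, turning them into down steps gives a path from `h + k`.
theorem levelPaths_zero (m h k : ℕ) : levelPaths m h 0 k = ballot m (h + k) := by
  induction m generalizing h k with
  | zero => cases h <;> cases k <;> simp [levelPaths, ballot]
  | succ m ih =>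
    cases h <;> cases k <;>
      simp [levelPaths, ballot, ih, ← add_assoc, add_right_comm _ _ 1, add_comm 1]

-- The last summand, which vanishes at `h = 0`, is there to make the induction go through.
theorem levelPaths_one (m h k : ℕ) :
    levelPaths m h 1 k =
      k * ballot m (h + k + 2) + if h = 0 ∨ k = 0 then 0 else ballot m (h + k) := by
  induction m generalizing h k with
  | zero => cases h <;> cases k <;> simp [levelPaths, ballot]
  | succ m ih =>
    rcases h with _ | _ | h
    · cases k
      · simp [levelPaths, ballot, ih]
      · simp [levelPaths, ballot, ih, ← add_assoc, add_right_comm _ _ 1]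
        ring_nf
    · cases k
      · simp [levelPaths, ballot, ih]
      · simp [levelPaths, ballot, ih, levelPaths_zero, ← add_assoc, add_right_comm _ _ 1,
          add_comm 1]
        ring_nf
    · cases k
      · simp [levelPaths, ballot, ih]
      · simp [levelPaths, ballot, ih, ← add_assoc, add_right_comm _ _ 1]
        ring_nf

theorem card_eq_card_filter_lt_add_eq_add_gt {ι α : Type*} [LinearOrder α] (s : Finset ι)
    (f g : ι → α) :
    #s = #{i ∈ s | f i < g i} + #{i ∈ s | f i = g i} + #{i ∈ s | g i < f i} := by
  simp only [card_filter, card_eq_sum_ones s, ← sum_add_distrib]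
  refine sum_congr rfl fun i _ => ?_
  rcases lt_trichotomy (f i) (g i) with h | h | h
  · simp [h, h.ne, h.not_gt]
  · simp [h]
  · simp [h, h.ne', h.not_gt]

theorem sum_sq_eq_one_iff {ι : Type*} {s : Finset ι} {f : ι → ℕ} :
    ∑ i ∈ s, f i ^ 2 = 1 ↔ ∑ i ∈ s, f i = 1 := by
  have sum_le : ∑ i ∈ s, f i ≤ ∑ i ∈ s, f i ^ 2 :=
    sum_le_sum fun i _ => Nat.le_self_pow two_ne_zero (f i)
  have le_sq : ∑ i ∈ s, f i ^ 2 ≤ (∑ i ∈ s, f i) ^ 2 := by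
    simp only [sq, sum_mul]
    exact sum_le_sum fun i hi => Nat.mul_le_mul_left _ (single_le_sum_of_canonicallyOrdered hi)
  constructor <;> intro h
  · have : ∑ i ∈ s, f i ≠ 0 := fun h0 => by simp [h, h0] at le_sq
    lia
  · rw [h] at sum_le le_sq
    exact le_antisymm le_sq sum_le

section SwapMul

variable {α : Type*} [DecidableEq α] {π : Perm α} {x t : α}

theorem involutive_swap_mul (h : Function.Involutive π) (hcomm : Commute (swap x t) π) :
    Function.Involutive (swap x t * π) := fun y => by
  have := DFunLike.congr_fun hcomm (π y)
  simp only [Perm.mul_apply] at this ⊢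
  rw [← this, h, Equiv.swap_apply_self]

theorem swap_mul_apply_of_fixed (hx : π x = x) (ht : π t = t) (y : α) :
    (swap x t * π) y = if y = x then t else if y = t then x else π y := by
  have := π.injective.eq_iff (a := y) (b := x)
  have := π.injective.eq_iff (a := y) (b := t)
  simp only [Perm.mul_apply, Equiv.swap_apply_def]
  grind

theorem swap_mul_apply_of_exchanged (hx : π x = t) (ht : π t = x) (y : α) :
    (swap x t * π) y = if y = x ∨ y = t then y else π y := by
  have := π.injective.eq_iff (a := y) (b := x)
  have := π.injective.eq_iff (a := y) (b := t)
  simp only [Perm.mul_apply, Equiv.swap_apply_def]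
  grind

end SwapMul

section ScanStates

variable {α : Type*} [LinearOrder α]

/-- No arc of the involution `π` lies strictly inside another one. It is enough to require `b` to be
an opener: `π b < π a` would force `a` to be one as well. -/
def IsNonnesting (π : Perm α) : Prop :=
  ∀ ⦃a b⦄, a < b → b < π b → π a ≤ π b

/-- The number of arcs of the involution `π` that pass over `b`, each counted by its opener. -/
def arcsOver [Fintype α] (π : Perm α) (b : α) : ℕ :=
  #{a | a < b ∧ b < π a}

theorem card_lt_and_apply_lt [Fintype α] {π : Perm α} (hπ : Function.Involutive π) (b : α) :
    #{a | b < a ∧ π a < b} = arcsOver π b := by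
  refine card_nbij' π π (fun a ha => ?_) (fun a ha => ?_) (fun a _ => hπ a) fun a _ => hπ a
  · simpa [hπ a, and_comm] using ha
  · simpa [hπ a, and_comm] using ha

/-- `π` is what remains of a nonnesting involution after the elements outside `L` have been read and
the arcs and fixed points read in full have been erased: `L` holds the elements not yet read, `T`
the closers whose opener is not yet read. -/
structure IsScanState (L T : Finset α) (π : Perm α) : Prop where
  involutive : Function.Involutive π
  nonnesting : IsNonnesting π
  mem_of_ne : ∀ ⦃y⦄, π y ≠ y → y ∈ L ∪ T
  apply_lt : ∀ ⦃t⦄, t ∈ T → π t < t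

namespace IsScanState

variable {L T : Finset α} {π : Perm α} {x t y : α}

theorem mem_of_lt_apply (h : IsScanState L T π) (hy : y < π y) : y ∈ L :=
  (mem_union.1 (h.mem_of_ne hy.ne')).resolve_right fun hyT => hy.asymm (h.apply_lt hyT)

theorem apply_mem_of_ne (h : IsScanState L T π) (hy : π y ≠ y) : π y ∈ L ∪ T :=
  h.mem_of_ne (π.injective.ne hy)

theorem apply_mem_of_lt (h : IsScanState L T π) (hy : π y < y) : π y ∈ L :=
  h.mem_of_lt_apply (by rwa [h.involutive])

theorem arcsOver_eq_card [Fintype α] (h : IsScanState L T π) (hL : ∀ l ∈ L, l < x)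
    (hT : ∀ u ∈ T, x < u) : arcsOver π x = #T := by
  refine card_nbij' π π (fun a ha => ?_) (fun u hu => ?_) (fun a _ => h.involutive a)
    fun u _ => h.involutive u
  · obtain ⟨hax, hxa⟩ : a < x ∧ x < π a := by simpa using ha
    have := h.apply_mem_of_ne (hax.trans hxa).ne'
    exact (mem_union.1 this).resolve_left fun hl => hxa.asymm (hL _ hl)
  · have hπu := hL _ (h.apply_mem_of_lt (h.apply_lt hu))
    simpa [h.involutive u] using ⟨hπu, hT u hu⟩

theorem apply_eq_of_lt_apply (h : IsScanState (insert x L) (insert t T) π)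
    (hL : ∀ l ∈ L, l < x) (hT : ∀ u ∈ T, u < t) (hx : x < π x) : π x = t := by
  by_contra hne
  have hπx : π x < t := by
    have hmem := h.apply_mem_of_ne hx.ne'
    have := hL (π x)
    have := hT (π x)
    simp only [mem_union, mem_insert] at hmem
    grind
  have hπt : π t < x := by
    have hmem := h.apply_mem_of_lt (h.apply_lt (mem_insert_self t T))
    rcases mem_insert.1 hmem with heq | hmem
    · exact absurd (heq ▸ h.involutive t) hne
    · exact hL _ hmem
  have := h.nonnesting hπt hx
  rw [h.involutive] at this
  exact this.not_gt hπx

theorem insert_and_apply_lt_iff :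
    IsScanState (insert x L) T π ∧ π x < x ↔ IsScanState L (insert x T) π := by
  constructor
  · rintro ⟨h, hx⟩
    exact ⟨h.involutive, h.nonnesting, by simpa using h.mem_of_ne,
      by simpa [hx] using h.apply_lt⟩
  · intro h
    have hlt : π x < x ∧ ∀ u ∈ T, π u < u := by simpa using h.apply_lt
    exact ⟨⟨h.involutive, h.nonnesting, by simpa using h.mem_of_ne, hlt.2⟩, hlt.1⟩

theorem insert_and_apply_eq_iff (hL : x ∉ L) (hT : x ∉ T) :
    IsScanState (insert x L) T π ∧ π x = x ↔ IsScanState L T π := by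
  constructor
  · rintro ⟨h, hx⟩
    refine ⟨h.involutive, h.nonnesting, fun y hy => ?_, h.apply_lt⟩
    have := h.mem_of_ne hy
    grind
  · intro h
    refine ⟨⟨h.involutive, h.nonnesting, fun y hy => ?_, h.apply_lt⟩, ?_⟩
    · have := h.mem_of_ne hy
      grind
    · by_contra hx
      have := h.mem_of_ne hx
      grind

theorem apply_eq_of_notMem (h : IsScanState L T π) (hL : y ∉ L) (hT : y ∉ T) : π y = y := by
  by_contra hne
  exact (mem_union.1 (h.mem_of_ne hne)).elim hL hT

theorem swap_mul (h : IsScanState L T π) (hL : ∀ l ∈ L, l < x) (hxt : x < t)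
    (hT : ∀ u ∈ T, x < u ∧ u < t) :
    IsScanState (insert x L) (insert t T) (swap x t * π) := by
  have hx : π x = x := h.apply_eq_of_notMem (by grind) (by grind)
  have ht : π t = t := h.apply_eq_of_notMem (by grind) (by grind)
  have hσ := swap_mul_apply_of_fixed hx ht
  have opener_lt : ∀ y, y < π y → y < x := fun y hy => hL y (h.mem_of_lt_apply hy)
  have le_top : ∀ y, y < π y → π y ≤ t := fun y hy => by
    have := h.apply_mem_of_ne hy.ne'
    grind
  refine ⟨involutive_swap_mul h.involutive ?_, fun a b hab hb => ?_, fun y hy => ?_, fun u hu => ?_⟩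
  · rw [Commute, SemiconjBy, Equiv.mul_swap_eq_swap_mul, hx, ht]
  -- The new arc joins the largest opener to the largest closer, so it is in no nested pair.
  · have := h.nonnesting hab
    grind
  · have := h.mem_of_ne (y := y)
    grind
  · have := h.apply_lt (t := u)
    grind

theorem of_swap_mul (h : IsScanState (insert x L) (insert t T) π) (hx : π x = t)
    (hxT : x ∉ T) (htT : t ∉ T) : IsScanState L T (swap x t * π) := by
  have ht : π t = x := by rw [← hx, h.involutive]
  have hσ := swap_mul_apply_of_exchanged hx ht
  refine ⟨involutive_swap_mul h.involutive ?_, fun a b hab hb => ?_, fun y hy => ?_, fun u hu => ?_⟩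
  · rw [Commute, SemiconjBy, Equiv.mul_swap_eq_swap_mul, hx, ht, Equiv.swap_comm]
  · have := h.nonnesting hab
    grind
  · have := h.mem_of_ne (y := y)
    grind
  · have := h.apply_lt (t := u)
    grind

theorem swap_mul_iff (hL : ∀ l ∈ L, l < x) (hxt : x < t) (hT : ∀ u ∈ T, x < u ∧ u < t) :
    IsScanState (insert x L) (insert t T) (swap x t * π) ∧ x < (swap x t * π) x ↔
      IsScanState L T π := by
  constructor
  · rintro ⟨h, hx⟩
    have hxt := h.apply_eq_of_lt_apply hL (fun u hu => (hT u hu).2) hx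
    simpa using h.of_swap_mul hxt (fun hx => (hT x hx).1.false) fun ht => (hT t ht).2.false
  · intro h
    have hx : π x = x :=
      h.apply_eq_of_notMem (fun hx => (hL x hx).false) fun hx => (hT x hx).1.false
    exact ⟨h.swap_mul hL hxt hT, by simpa [hx] using hxt⟩

theorem empty_iff : IsScanState ∅ T π ↔ T = ∅ ∧ π = 1 := by
  constructor
  · intro h
    have hT : T = ∅ := eq_empty_of_forall_notMem fun t ht =>
      notMem_empty _ (h.apply_mem_of_lt (h.apply_lt ht))
    subst hT
    exact ⟨rfl, Equiv.ext fun y => h.apply_eq_of_notMem (notMem_empty y) (notMem_empty y)⟩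
  · rintro ⟨rfl, rfl⟩
    exact ⟨fun _ => rfl, fun _ _ hab _ => hab.le, fun _ hy => absurd rfl hy, by simp⟩

theorem univ_empty_iff [Fintype α] :
    IsScanState univ ∅ π ↔ Function.Involutive π ∧ IsNonnesting π :=
  ⟨fun h => ⟨h.involutive, h.nonnesting⟩, fun h => ⟨h.1, h.2, by simp, by simp⟩⟩

end IsScanState

variable {L T : Finset α} {π : Perm α} {x t : α} {c k : ℕ}

/-- The fixed points of `π` in `L`. -/
def fixedIn (π : Perm α) (L : Finset α) : Finset α :=
  {b ∈ L | π b = b}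

theorem fixedIn_insert_of_ne (hx : π x ≠ x) : fixedIn π (insert x L) = fixedIn π L := by
  rw [fixedIn, filter_insert, if_neg hx, fixedIn]

theorem fixedIn_insert_of_eq (hx : π x = x) :
    fixedIn π (insert x L) = insert x (fixedIn π L) := by
  rw [fixedIn, filter_insert, if_pos hx, fixedIn]

theorem fixedIn_swap_mul (hL : ∀ l ∈ L, l < x) (hxt : x < t) :
    fixedIn (swap x t * π) L = fixedIn π L := by
  refine filter_congr fun b hb => ?_
  have := hL b hb
  simp only [Perm.mul_apply, Equiv.swap_apply_def]
  grind

variable [Fintype α]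

theorem arcsOver_swap_mul_of_lt {b : α} (hbx : b < x) (hxt : x < t) :
    arcsOver (swap x t * π) b = arcsOver π b := by
  refine congrArg card (filter_congr fun a _ => and_congr_right fun hab => ?_)
  have := hab.trans hbx
  simp only [Perm.mul_apply, Equiv.swap_apply_def]
  grind

/-- The number of pairs of a fixed point of `π` in `L` and an arc passing over it. -/
def fixedCover (π : Perm α) (L : Finset α) : ℕ :=
  ∑ b ∈ fixedIn π L, arcsOver π b

theorem fixedCover_swap_mul (hL : ∀ l ∈ L, l < x) (hxt : x < t) :
    fixedCover (swap x t * π) L = fixedCover π L := by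
  rw [fixedCover, fixedIn_swap_mul hL hxt]
  exact sum_congr rfl fun b hb => arcsOver_swap_mul_of_lt (hL b (mem_filter.1 hb).1) hxt

open Classical in
/-- The permutations `π` with `IsScanState L T π` that have `k` fixed points in `L`, under `c` arcs
altogether. -/
noncomputable def scanStates (L T : Finset α) (c k : ℕ) : Finset (Perm α) :=
  {π | IsScanState L T π ∧ fixedCover π L = c ∧ #(fixedIn π L) = k}

theorem mem_scanStates :
    π ∈ scanStates L T c k ↔ IsScanState L T π ∧ fixedCover π L = c ∧ #(fixedIn π L) = k := by
  simp [scanStates]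

theorem filter_apply_lt_scanStates :
    {π ∈ scanStates (insert x L) T c k | π x < x} = scanStates L (insert x T) c k := by
  ext π
  simp only [mem_filter, mem_scanStates, ← IsScanState.insert_and_apply_lt_iff,
    and_right_comm (c := π x < x)]
  refine and_congr_right fun h => ?_
  rw [fixedCover, fixedIn_insert_of_ne h.2.ne, fixedCover]

theorem mem_scanStates_insert_and_apply_eq_iff (hL : ∀ l ∈ L, l < x) (hT : ∀ u ∈ T, x < u) :
    π ∈ scanStates (insert x L) T c k ∧ π x = x ↔
      IsScanState L T π ∧ #T + fixedCover π L = c ∧ #(fixedIn π L) + 1 = k := by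
  have hxL : x ∉ L := fun hx => (hL x hx).false
  have hxT : x ∉ T := fun hx => (hT x hx).false
  rw [mem_scanStates, and_right_comm, IsScanState.insert_and_apply_eq_iff hxL hxT]
  refine and_congr_right fun h => ?_
  have hx : x ∉ fixedIn π L := fun hx => hxL (mem_filter.1 hx).1
  rw [fixedCover, fixedIn_insert_of_eq (h.apply_eq_of_notMem hxL hxT), sum_insert hx,
    card_insert_of_notMem hx, h.arcsOver_eq_card hL hT, fixedCover]

theorem card_filter_apply_eq_scanStates (hL : ∀ l ∈ L, l < x) (hT : ∀ u ∈ T, x < u) :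
    #{π ∈ scanStates (insert x L) T c k | π x = x} =
      if #T ≤ c ∧ k ≠ 0 then #(scanStates L T (c - #T) (k - 1)) else 0 := by
  split_ifs with hck
  · congr 1
    ext π
    rw [mem_filter, mem_scanStates_insert_and_apply_eq_iff hL hT, mem_scanStates]
    refine and_congr_right fun _ => ?_
    lia
  · refine card_eq_zero.2 (filter_eq_empty_iff.2 fun π hπ hx => ?_)
    have := (mem_scanStates_insert_and_apply_eq_iff hL hT).1 ⟨hπ, hx⟩
    lia

theorem card_filter_lt_apply_scanStates_insert (hL : ∀ l ∈ L, l < x) (hxt : x < t)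
    (hT : ∀ u ∈ T, x < u ∧ u < t) :
    #{π ∈ scanStates (insert x L) (insert t T) c k | x < π x} = #(scanStates L T c k) := by
  symm
  refine card_equiv (Equiv.mulLeft (swap x t)) fun π => ?_
  rw [Equiv.coe_mulLeft, mem_filter, mem_scanStates, mem_scanStates, and_right_comm,
    IsScanState.swap_mul_iff hL hxt hT]
  refine and_congr_right fun h => ?_
  have hx := ((IsScanState.swap_mul_iff hL hxt hT).2 h).2.ne'
  rw [← fixedCover_swap_mul hL hxt, ← fixedIn_swap_mul hL hxt, fixedCover, fixedCover,
    fixedIn_insert_of_ne hx]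

theorem filter_lt_apply_scanStates_empty (hL : ∀ l ∈ L, l < x) :
    {π ∈ scanStates (insert x L) ∅ c k | x < π x} = ∅ := by
  refine filter_eq_empty_iff.2 fun π hπ hx => ?_
  have h := (mem_scanStates.1 hπ).1
  have := h.apply_mem_of_ne hx.ne'
  grind

theorem card_scanStates_empty (T : Finset α) (c k : ℕ) :
    #(scanStates ∅ T c k) = if #T = 0 ∧ c = 0 ∧ k = 0 then 1 else 0 := by
  have hmem : ∀ π, π ∈ scanStates ∅ T c k ↔ (#T = 0 ∧ c = 0 ∧ k = 0) ∧ π = 1 := fun π => by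
    simp [mem_scanStates, IsScanState.empty_iff, fixedCover, fixedIn, eq_comm, and_right_comm]
  split_ifs with h
  · exact card_eq_one.2 ⟨1, by ext π; rw [hmem, mem_singleton, and_iff_right h]⟩
  · exact card_eq_zero.2 (eq_empty_of_forall_notMem fun π hπ => h ((hmem π).1 hπ).1)

theorem card_scanStates (L : Finset α) : ∀ (T : Finset α) (c k : ℕ), (∀ l ∈ L, ∀ u ∈ T, l < u) →
    #(scanStates L T c k) = levelPaths #L #T c k := by
  induction L using Finset.induction_on_max with
  | empty => exact fun T c k _ => card_scanStates_empty T c k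
  | insert x L hL ih =>
    intro T c k hLT
    have hxL : x ∉ L := fun hx => (hL x hx).false
    have hT : ∀ u ∈ T, x < u := hLT x (mem_insert_self x L)
    have hxT : x ∉ T := fun hx => (hT x hx).false
    have closer : #{π ∈ scanStates (insert x L) T c k | π x < x} = levelPaths #L (#T + 1) c k := by
      rw [filter_apply_lt_scanStates, ih _ _ _ (by grind), card_insert_of_notMem hxT]
    have fixed : #{π ∈ scanStates (insert x L) T c k | π x = x} =
        if #T ≤ c ∧ k ≠ 0 then levelPaths #L #T (c - #T) (k - 1) else 0 := by
      rw [card_filter_apply_eq_scanStates hL hT, ih _ _ _ (by grind)]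
    have opener : #{π ∈ scanStates (insert x L) T c k | x < π x} =
        if #T = 0 then 0 else levelPaths #L (#T - 1) c k := by
      rcases T.eq_empty_or_nonempty with rfl | hne
      · simp [filter_lt_apply_scanStates_empty hL]
      · obtain ⟨t, T, htT, rfl⟩ : ∃ t U, (∀ u ∈ U, u < t) ∧ insert t U = T :=
          ⟨T.max' hne, T.erase (T.max' hne), fun u => T.lt_max'_of_mem_erase_max' hne,
            insert_erase (T.max'_mem hne)⟩
        have ht : t ∉ T := fun ht => (htT t ht).false
        rw [card_filter_lt_apply_scanStates_insert hL (by grind) (by grind), ih _ _ _ (by grind)]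
        simp [ht]
    rw [card_insert_of_notMem hxL, levelPaths, ← closer, ← fixed, ← opener]
    exact card_eq_card_filter_lt_add_eq_add_gt _ (fun π : Perm α => π x) fun _ => x

end ScanStates

section Occurrences

variable {n : ℕ} {π : Perm (Fin n)}

theorem occ321_eq_sum_mul (π : Perm (Fin n)) :
    occ321 π = ∑ j, #{i | i < j ∧ π j < π i} * #{l | j < l ∧ π l < π j} := by
  have e : {t : Fin n × Fin n × Fin n //
      t.1 < t.2.1 ∧ t.2.1 < t.2.2 ∧ (π t.2.2 < π t.2.1 ∧ π t.2.1 < π t.1)} ≃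
      Σ j, {i // i < j ∧ π j < π i} × {l // j < l ∧ π l < π j} :=
    { toFun t := ⟨t.1.2.1, ⟨t.1.1, t.2.1, t.2.2.2.2⟩, ⟨t.1.2.2, t.2.2.1, t.2.2.2.1⟩⟩
      invFun s := ⟨(s.2.1, s.1, s.2.2), s.2.1.2.1, s.2.2.2.1, s.2.2.2.2, s.2.1.2.2⟩ }
  rw [occ321, Nat.card_congr e]
  simp [Fintype.card_subtype]

theorem occ321_eq_sum_sq (hπ : Function.Involutive π) (hnest : IsNonnesting π) :
    occ321 π = ∑ j ∈ fixedIn π univ, arcsOver π j ^ 2 := by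
  rw [occ321_eq_sum_mul, fixedIn, sum_filter]
  refine sum_congr rfl fun j _ => ?_
  rcases lt_trichotomy (π j) j with hj | hj | hj
  · have : #{l | j < l ∧ π l < π j} = 0 := by
      simp only [card_eq_zero, filter_eq_empty_iff, mem_univ, true_imp_iff]
      rintro l ⟨hjl, hl⟩
      have := hnest hl (by rwa [hπ])
      rw [hπ, hπ] at this
      exact this.not_gt hjl
    rw [this, mul_zero, if_neg hj.ne]
  · rw [hj, card_lt_and_apply_lt hπ j, if_pos rfl, sq, arcsOver]
  · have : #{i | i < j ∧ π j < π i} = 0 := by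
      simp only [card_eq_zero, filter_eq_empty_iff, mem_univ, true_imp_iff]
      exact fun i hi => (hnest hi.1 hj).not_gt hi.2
    rw [this, zero_mul, if_neg hj.ne']

theorem isNonnesting_of_occ321_eq_one (hπ : Function.Involutive π) (h : occ321 π = 1) :
    IsNonnesting π := by
  intro a b hab hb
  by_contra! hlt
  have heq := (Nat.card_eq_one_iff_unique.1 h).1.allEq
    ⟨(a, b, π a), hab, hb.trans hlt, by simpa [hπ a] using hab.trans hb, hlt⟩
    ⟨(a, π b, π a), hab.trans hb, hlt, by simpa [hπ a, hπ b] using hab,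
      by simpa [hπ b] using hb.trans hlt⟩
  exact hb.ne (congrArg (fun t => t.1.2.1) heq)

theorem occ321_eq_one_iff (hπ : Function.Involutive π) :
    occ321 π = 1 ↔ IsNonnesting π ∧ fixedCover π univ = 1 := by
  refine ⟨fun h => ?_, fun ⟨hnest, h⟩ => ?_⟩
  · have hnest := isNonnesting_of_occ321_eq_one hπ h
    exact ⟨hnest, sum_sq_eq_one_iff.1 (occ321_eq_sum_sq hπ hnest ▸ h)⟩
  · rw [occ321_eq_sum_sq hπ hnest]
    exact sum_sq_eq_one_iff.2 h

theorem iCountOnce321_eq_card_scanStates (n k : ℕ) :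
    iCountOnce321 n k = #(scanStates (univ : Finset (Fin n)) ∅ 1 k) := by
  refine Nat.subtype_card _ fun π => ?_
  rw [mem_scanStates, IsScanState.univ_empty_iff, and_assoc]
  refine and_congr_right fun hπ => ?_
  rw [occ321_eq_one_iff hπ, and_assoc]
  rfl

theorem iCountOnce321_eq (n k : ℕ) : iCountOnce321 n k = k * ballot n (k + 2) := by
  rw [iCountOnce321_eq_card_scanStates, card_scanStates _ _ _ _ (by simp), levelPaths_one]
  simp

end Occurrences

/-- For all `n ≥ 3` and `0 ≤ k ≤ n` with `n + k` even,
`(n+1) · i_n^k(∅;321) = k(k+3) · C(n+1, (n-k)/2 - 1)`, where `C(n+1, (n-k)/2 - 1)`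
is interpreted as `0` when `(n-k)/2 - 1` is negative (i.e. when `k = n`); when `n + k` is
odd, `i_n^k(∅;321) = 0`. -/
theorem statement18 (n k : ℕ) (hn : 3 ≤ n) (hk : k ≤ n) :
    (Even (n + k) → (n + 1) * iCountOnce321 n k =
      k * (k + 3) * (if (n - k) / 2 = 0 then 0 else (n + 1).choose ((n - k) / 2 - 1))) ∧
    (Odd (n + k) → iCountOnce321 n k = 0) := by
  rw [iCountOnce321_eq]
  refine ⟨fun heven => ?_, fun hodd => ?_⟩
  · split_ifs with h
    · rw [ballot_eq_zero (by lia), mul_zero, mul_zero, mul_zero]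
    · have closed := succ_mul_ballot (m := n) (h := k + 2) (i := (n - k) / 2 - 1) (by grind)
      linear_combination k * closed
  · rw [ballot_eq_zero (by grind), mul_zero]
end

section
/- For all integers n ≥ 2 and 0 ≤ k ≤ n with n + k even, the following binomial–Catalan identity holds: ((k+3)/(n+1))·C(n+1, (n-k)/2 - 1) = Σ_{i=1}^{(n-k)/2} ((k+1)/(n-2i+1))·C(n-2i+1, (n-k-2i)/2)·C_i, where each summand ((k+1)/(m+1))·C(m+1, j) (with m = n-2i, j = (n-k-2i)/2) is the integer (k+1)·C(m+1, j)/(m+1); equivalently, the same identity holds after multiplying both sides by (n+1)·∏(n-2i+1). -/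
/-!
The Catalan series `C` satisfies `X * C ^ 2 = C - 1`, so `X * C ^ (k + 3) = (C - 1) * C ^ (k + 1)`.
The identity compares coefficients of the two sides: the coefficient of `X ^ m` in `C ^ p` is the
ballot number `p / (2 * m + p) * (2 * m + p).choose m`, and passing from `C` to `C - 1` removes the
term `i = 0` of the convolution.
-/

section CatalanSeriesPowers

open PowerSeries

theorem X_mul_catalanSeries_pow_add_two_add_pow (p : ℕ) :
    X * catalanSeries ^ (p + 2) + catalanSeries ^ p = catalanSeries ^ (p + 1) :=
  calc X * catalanSeries ^ (p + 2) + catalanSeries ^ p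
      = catalanSeries ^ p * (catalanSeries ^ 2 * X + 1) := by ring
    _ = catalanSeries ^ (p + 1) := by rw [catalanSeries_sq_mul_X_add_one, pow_succ]

theorem coeff_catalanSeries_pow_add_two_add_coeff_succ (p m : ℕ) :
    coeff m (catalanSeries ^ (p + 2)) + coeff (m + 1) (catalanSeries ^ p) =
      coeff (m + 1) (catalanSeries ^ (p + 1)) := by
  rw [← X_mul_catalanSeries_pow_add_two_add_pow p, map_add, coeff_succ_X_mul]

theorem coeff_catalanSeries_pow_succ_eq_sum_range (p m : ℕ) :
    coeff m (catalanSeries ^ (p + 1)) =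
      ∑ i ∈ Finset.range (m + 1), coeff (m - i) (catalanSeries ^ p) * catalan i := by
  rw [pow_succ', coeff_mul, Finset.Nat.sum_antidiagonal_eq_sum_range_succ_mk]
  simp only [catalanSeries_coeff, mul_comm]

theorem coeff_catalanSeries_pow_add_two_eq_sum_Icc (p m : ℕ) :
    coeff m (catalanSeries ^ (p + 2)) =
      ∑ i ∈ Finset.Icc 1 (m + 1), coeff (m + 1 - i) (catalanSeries ^ p) * catalan i := by
  have hconv := coeff_catalanSeries_pow_succ_eq_sum_range p (m + 1)
  rw [← coeff_catalanSeries_pow_add_two_add_coeff_succ, Finset.range_eq_Ico,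
    Finset.sum_eq_sum_Ico_succ_bot (by omega), catalan_zero, mul_one, Nat.sub_zero,
    add_comm] at hconv
  exact add_left_cancel hconv

theorem ballot_choose_recurrence (p m : ℕ) :
    (2 * m + p + 3) * (p * (2 * m + p + 2).choose (m + 1) + (p + 2) * (2 * m + p + 2).choose m) =
      (2 * m + p + 2) * ((p + 1) * (2 * m + p + 3).choose (m + 1)) := by
  have hpascal := Nat.choose_succ_succ (2 * m + p + 2) m
  have habsorb := Nat.choose_succ_right_eq (2 * m + p + 2) m
  rw [show 2 * m + p + 2 - m = m + p + 2 by omega] at habsorb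
  rw [hpascal]
  zify at habsorb ⊢
  linear_combination -2 * habsorb

theorem two_mul_add_mul_coeff_catalanSeries_pow (p m : ℕ) :
    (2 * m + p) * coeff m (catalanSeries ^ p) = p * (2 * m + p).choose m := by
  induction m generalizing p with
  | zero => simp
  | succ m ihm =>
    induction p with
    | zero => simp [coeff_one]
    | succ p ihp =>
      have hm := ihm (p + 2)
      rw [show 2 * m + (p + 2) = 2 * m + p + 2 by ring] at hm
      rw [show 2 * (m + 1) + p = 2 * m + p + 2 by ring] at ihp
      rw [show 2 * (m + 1) + (p + 1) = 2 * m + p + 3 by ring]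
      apply Nat.eq_of_mul_eq_mul_left (show 0 < 2 * m + p + 2 by omega)
      rw [← ballot_choose_recurrence, ← ihp, ← hm,
        ← coeff_catalanSeries_pow_add_two_add_coeff_succ]
      ring

theorem cast_coeff_catalanSeries_pow {K : Type*} [Semifield K] [CharZero K] {p : ℕ} (hp : p ≠ 0)
    (m : ℕ) :
    ((coeff m (catalanSeries ^ p) : ℕ) : K) =
      (p : K) / ((2 * m + p : ℕ) : K) * ((2 * m + p).choose m : K) := by
  have hne : ((2 * m + p : ℕ) : K) ≠ 0 := Nat.cast_ne_zero.mpr (by omega)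
  rw [div_mul_eq_mul_div, eq_div_iff hne, mul_comm]
  exact_mod_cast two_mul_add_mul_coeff_catalanSeries_pow p m

end CatalanSeriesPowers

/-- For all `n ≥ 2` and `0 ≤ k ≤ n` with `n + k` even,
`((k+3)/(n+1)) · C(n+1, (n-k)/2 - 1)
  = ∑_{i=1}^{(n-k)/2} ((k+1)/(n-2i+1)) · C(n-2i+1, (n-k-2i)/2) · C_i`,
where `C(n+1, (n-k)/2 - 1)` is interpreted as `0` when `(n-k)/2 - 1` is negative (i.e.
when `k = n`), and `C_i` is the `i`-th Catalan number.  Stated over `ℚ`. -/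
theorem statement19 (n k : ℕ) (hn : 2 ≤ n) (hk : k ≤ n) (hpar : Even (n + k)) :
    ((k : ℚ) + 3) / ((n : ℚ) + 1) *
        (if (n - k) / 2 = 0 then 0 else ((n + 1).choose ((n - k) / 2 - 1) : ℚ)) =
      ∑ i ∈ Finset.Icc 1 ((n - k) / 2),
        ((k : ℚ) + 1) / ((n - 2 * i + 1 : ℕ) : ℚ) *
          ((n - 2 * i + 1).choose ((n - k - 2 * i) / 2) : ℚ) * (catalan i : ℚ) := by
  obtain ⟨m, rfl⟩ : ∃ m, n = k + 2 * m := by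
    obtain ⟨c, hc⟩ := hpar
    exact ⟨c - k, by omega⟩
  rw [show (k + 2 * m - k) / 2 = m by omega]
  cases m with
  | zero => simp
  | succ m =>
    calc
      _ = ((PowerSeries.coeff m (PowerSeries.catalanSeries ^ (k + 1 + 2)) : ℕ) : ℚ) := by
        rw [cast_coeff_catalanSeries_pow (by omega), if_neg (by omega), Nat.add_sub_cancel,
          show k + 2 * (m + 1) + 1 = 2 * m + (k + 1 + 2) by ring]
        push_cast
        ring
      _ = ∑ i ∈ Finset.Icc 1 (m + 1),
          ((PowerSeries.coeff (m + 1 - i) (PowerSeries.catalanSeries ^ (k + 1)) : ℕ) : ℚ) *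
            catalan i :=
        mod_cast coeff_catalanSeries_pow_add_two_eq_sum_Icc (k + 1) m
      _ = _ := Finset.sum_congr rfl fun i hi => by
        have hi_le : i ≤ m + 1 := (Finset.mem_Icc.mp hi).2
        rw [cast_coeff_catalanSeries_pow (by omega), Nat.cast_succ k,
          show k + 2 * (m + 1) - 2 * i + 1 = 2 * (m + 1 - i) + (k + 1) by omega,
          show (k + 2 * (m + 1) - k - 2 * i) / 2 = m + 1 - i by omega]
end
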